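/- arXiv:1511.07240 — 4 statements merged into one kernel-verified Lean document; each statement's English description precedes it below -/
import Mathlib

section
/- Under the hypotheses that g is holomorphic on the upper half-plane ℍ, g(z+1) = g(z) for all z ∈ ℍ, sup_{z∈ℍ} 2 Im(z)|g'(z)| ≤ β₀ < ∞, and g(x+iy) → 0 uniformly in x as y → ∞, the function I_p(y) := ∫₀¹ exp( Re(p·g(x+iy)) ) dx satisfies I_p'(y) ≤ 0 for all y > 0; that is, I_p is non-increasing on (0, ∞), for every p ∈ ℂ. -/
open Complex MeasureTheory Filter Topology Set

/-- The integral means `I_p(y) = ∫₀¹ exp(Re(p·g(x+iy))) dx`. -/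
noncomputable def Ip (g : ℂ → ℂ) (p : ℂ) (y : ℝ) : ℝ :=
  ∫ x in (0:ℝ)..1, Real.exp ((p * g ((x : ℂ) + (y : ℂ) * Complex.I)).re)

/-- The claimed first derivative of `I_p`:
`I_p'(y) = −∫₀¹ exp(Re(p·g(x+iy))) · Im(p·g'(x+iy)) dx`. -/
noncomputable def Ip' (g : ℂ → ℂ) (p : ℂ) (y : ℝ) : ℝ :=
  -∫ x in (0:ℝ)..1, Real.exp ((p * g ((x : ℂ) + (y : ℂ) * Complex.I)).re) *
      (p * deriv g ((x : ℂ) + (y : ℂ) * Complex.I)).im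

/-- The claimed second derivative of `I_p`:
`I_p''(y) = |p|² ∫₀¹ exp(Re(p·g(x+iy))) · |g'(x+iy)|² dx`. -/
noncomputable def Ip'' (g : ℂ → ℂ) (p : ℂ) (y : ℝ) : ℝ :=
  ‖p‖^2 * ∫ x in (0:ℝ)..1, Real.exp ((p * g ((x : ℂ) + (y : ℂ) * Complex.I)).re) *
      ‖deriv g ((x : ℂ) + (y : ℂ) * Complex.I)‖^2

/-- Horizontal integrals of the modulus of a periodic function do not depend on the real part. -/
lemma aux_shift (u : ℂ → ℂ) (hper : ∀ z : ℂ, 0 < z.im → u (z + 1) = u z) (s y : ℝ) (hy : 0 < y) :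
    ∫ x in (0:ℝ)..1, ‖u ((s : ℂ) + y * I + x)‖ = ∫ x in (0:ℝ)..1, ‖u ((x : ℂ) + y * I)‖ := by
  have hP : Function.Periodic (fun x : ℝ => ‖u ((x : ℂ) + y * I)‖) 1 := by
    intro x
    have := hper ((x : ℂ) + y * I) (by simpa using hy)
    simp only
    rw [← this]
    push_cast
    ring_nf
  have h1 := hP.intervalIntegral_add_eq s 0
  simp only [zero_add] at h1
  rw [← h1]
  have h2 := intervalIntegral.integral_comp_add_left (a := 0) (b := 1)
    (fun x : ℝ => ‖u ((x : ℂ) + y * I)‖) s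
  rw [add_zero] at h2
  rw [← h2]
  congr 1
  ext x
  push_cast
  ring_nf

/-- Monotonicity of the integral means, by duality and the Phragmen-Lindelof principle. -/
lemma aux_main (u : ℂ → ℂ)
    (hu : ∀ z : ℂ, 0 < z.im → DifferentiableAt ℂ u z)
    (hper : ∀ z : ℂ, 0 < z.im → u (z + 1) = u z)
    (h0 : ∀ z, u z ≠ 0)
    (hb : ∀ δ : ℝ, 0 < δ → ∃ M : ℝ, ∀ z : ℂ, δ ≤ z.im → ‖u z‖ ≤ M ∧ ‖deriv u z‖ ≤ M)
    (a b : ℝ) (ha : 0 < a) (hab : a ≤ b) :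
    ∫ x in (0:ℝ)..1, ‖u ((x : ℂ) + b * I)‖ ≤ ∫ x in (0:ℝ)..1, ‖u ((x : ℂ) + a * I)‖ := by
  have hbpos : 0 < b := ha.trans_le hab
  have hline : ∀ z : ℂ, 0 < z.im → Continuous (fun x : ℝ => u (z + x)) := by
    intro z hz
    rw [continuous_iff_continuousAt]
    intro x
    have h1 : ContinuousAt u (z + x) := (hu _ (by simpa using hz)).continuousAt
    exact ContinuousAt.comp (f := fun x : ℝ => z + (x : ℂ)) h1 (by fun_prop)
  have hdu : ∀ z : ℂ, 0 < z.im → DifferentiableAt ℂ (deriv u) z := by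
    intro z hz
    have hopen : IsOpen {z : ℂ | 0 < z.im} := isOpen_lt continuous_const continuous_im
    have : DifferentiableOn ℂ u {z : ℂ | 0 < z.im} :=
      fun z hz => (hu z hz).differentiableWithinAt
    exact (this.deriv hopen).differentiableAt (hopen.mem_nhds hz)
  have hline' : ∀ z : ℂ, 0 < z.im → Continuous (fun x : ℝ => deriv u (z + x)) := by
    intro z hz
    rw [continuous_iff_continuousAt]
    intro x
    have h1 : ContinuousAt (deriv u) (z + x) := (hdu _ (by simpa using hz)).continuousAt
    exact ContinuousAt.comp (f := fun x : ℝ => z + (x : ℂ)) h1 (by fun_prop)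
  set c : ℝ → ℂ := fun x => (starRingEnd ℂ) (u (b * I + x)) / (‖u (b * I + x)‖ : ℂ) with hc
  have hcn : ∀ x, ‖c x‖ = 1 := by
    intro x
    have := norm_ne_zero_iff.mpr (h0 (b * I + x))
    simp [hc, this]
  have hcu : ∀ x : ℝ, u (b * I + x) * c x = (‖u (b * I + x)‖ : ℂ) := by
    intro x
    have h1 : (‖u (b * I + x)‖ : ℂ) ≠ 0 := by
      exact_mod_cast norm_ne_zero_iff.mpr (h0 (b * I + x))
    simp only [hc]
    rw [← mul_div_assoc, Complex.mul_conj', sq, mul_div_assoc, div_self h1, mul_one]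
  have hcc : Continuous c := by
    have h1 := hline (b * I) (by simpa using hbpos)
    refine Continuous.div (continuous_conj.comp h1) (continuous_ofReal.comp h1.norm) ?_
    intro x
    exact_mod_cast norm_ne_zero_iff.mpr (h0 (b * I + x))
  set Φ : ℂ → ℂ := fun z => ∫ x in (0:ℝ)..1, u (z + x) * c x with hΦ
  have hΦd : ∀ z : ℂ, 0 < z.im → DifferentiableAt ℂ Φ z := by
    intro z hz
    obtain ⟨M, hM⟩ := hb (z.im / 2) (by linarith)
    have hs : {w : ℂ | z.im / 2 < w.im} ∈ 𝓝 z :=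
      (isOpen_lt continuous_const continuous_im).mem_nhds (by simp; linarith)
    have key := intervalIntegral.hasDerivAt_integral_of_dominated_loc_of_deriv_le
      (μ := volume) (a := 0) (b := 1) (F := fun w (x : ℝ) => u (w + x) * c x)
      (F' := fun w (x : ℝ) => deriv u (w + x) * c x) (x₀ := z) (bound := fun _ => M) hs
      ?_ ?_ ?_ ?_ ?_ ?_
    · exact key.2.differentiableAt
    · filter_upwards [hs] with w hw
      have hw' : z.im / 2 < w.im := hw
      exact ((hline w (by linarith)).mul hcc).aestronglyMeasurable
    · exact ((hline z hz).mul hcc).intervalIntegrable _ _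
    · exact ((hline' z hz).mul hcc).aestronglyMeasurable
    · refine Eventually.of_forall fun x _ w hw => ?_
      have hw' : z.im / 2 < w.im := hw
      rw [norm_mul, hcn, mul_one]
      exact (hM (w + x) (by simpa using hw'.le)).2
    · exact intervalIntegrable_const
    · refine Eventually.of_forall fun x _ w hw => ?_
      have hw' : z.im / 2 < w.im := hw
      have h1 : HasDerivAt u (deriv u (w + x)) (w + x) :=
        (hu _ (by simp; linarith)).hasDerivAt
      exact (HasDerivAt.comp_add_const w (x : ℂ) h1).mul_const (c x)
  have hΦle : ∀ z : ℂ, 0 < z.im → ‖Φ z‖ ≤ ∫ x in (0:ℝ)..1, ‖u ((x : ℂ) + z.im * I)‖ := by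
    intro z hz
    rw [← aux_shift u hper z.re z.im hz, Complex.re_add_im]
    refine (intervalIntegral.norm_integral_le_integral_norm zero_le_one).trans (le_of_eq ?_)
    simp [hcn]
  obtain ⟨M, hM⟩ := hb a ha
  have hΦM : ∀ z : ℂ, a ≤ z.im → ‖Φ z‖ ≤ M := by
    intro z hz
    have := intervalIntegral.norm_integral_le_of_norm_le_const (a := 0) (b := 1) (C := M)
      (f := fun x : ℝ => u (z + x) * c x) (fun x _ => by
        rw [norm_mul, hcn, mul_one]
        exact (hM _ (by simpa using hz)).1)
    simpa using this
  have him : ∀ w : ℂ, (I * w + a * I).im = w.re + a := by intro w; simp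
  have hPL := PhragmenLindelof.right_half_plane_of_bounded_on_real
    (f := fun w => Φ (I * w + a * I)) (z := ((b - a : ℝ) : ℂ))
    (C := ∫ x in (0:ℝ)..1, ‖u ((x : ℂ) + a * I)‖) ?_ ?_ ?_ ?_ ?_
  · have e1 : I * ((b - a : ℝ) : ℂ) + a * I = b * I := by push_cast; ring
    simp only [e1] at hPL
    have e2 : Φ (b * I) = ((∫ x in (0:ℝ)..1, ‖u ((x : ℂ) + b * I)‖ : ℝ) : ℂ) := by
      simp only [hΦ, hcu]
      rw [intervalIntegral.integral_ofReal]
      simp only [add_comm]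
    rw [e2, Complex.norm_real] at hPL
    exact (le_abs_self _).trans hPL
  · refine DifferentiableOn.diffContOnCl ?_
    rw [Complex.closure_setOfPred_lt_re]
    intro w hw
    have hw' : 0 ≤ w.re := hw
    refine DifferentiableAt.differentiableWithinAt ?_
    have h1 := hΦd (I * w + a * I) (by rw [him]; linarith)
    exact DifferentiableAt.comp (f := fun w : ℂ => I * w + a * I) w h1 (by fun_prop)
  · refine ⟨0, by norm_num, 0, ?_⟩
    refine Asymptotics.IsBigO.of_bound M ?_
    refine (Filter.eventually_inf_principal.mpr (Eventually.of_forall fun w hw => ?_))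
    have hw' : 0 < w.re := hw
    simpa using hΦM (I * w + a * I) (by rw [him]; linarith)
  · refine ⟨M, ?_⟩
    simp only [eventually_map]
    filter_upwards [eventually_ge_atTop 0] with x hx
    exact hΦM _ (by rw [him, Complex.ofReal_re]; linarith)
  · intro x
    have h1 : (I * (x * I) + a * I).im = a := by simp
    have := hΦle (I * (x * I) + a * I) (by rw [h1]; exact ha)
    rwa [h1] at this
  · simp only [Complex.ofReal_re]; linarith

lemma aux_bound (β₀ : ℝ) (g : ℂ → ℂ)
    (hg : ∀ z : ℂ, 0 < z.im → DifferentiableAt ℂ g z)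
    (hbloch : ∀ z : ℂ, 0 < z.im → 2 * z.im * ‖deriv g z‖ ≤ β₀)
    (hdecay : ∀ ε : ℝ, 0 < ε → ∃ Y : ℝ, ∀ x y : ℝ, Y ≤ y →
      ‖g ((x : ℂ) + (y : ℂ) * Complex.I)‖ < ε) (δ : ℝ) (hδ : 0 < δ) :
    ∃ M : ℝ, 0 ≤ M ∧ ∀ z : ℂ, δ ≤ z.im → ‖g z‖ ≤ M ∧ ‖deriv g z‖ ≤ M := by
  obtain ⟨Y, hY⟩ := hdecay 1 one_pos
  have hβ : 0 ≤ β₀ := by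
    have := hbloch I (by simp)
    refine le_trans ?_ this
    simp
  have hK : 0 ≤ β₀ / (2 * δ) := by positivity
  set K := β₀ / (2 * δ) with hKdef
  have hder : ∀ z : ℂ, δ ≤ z.im → ‖deriv g z‖ ≤ K := by
    intro z hz
    rw [hKdef, le_div_iff₀ (by positivity)]
    have := hbloch z (by linarith)
    nlinarith [norm_nonneg (deriv g z)]
  have hconv : Convex ℝ {z : ℂ | δ ≤ z.im} := convex_halfSpace_im_ge δ
  set T := max Y δ with hT
  have hTδ : 0 ≤ T - δ := by have := le_max_right Y δ; linarith
  refine ⟨1 + K + K * (T - δ), by positivity, fun z hz => ⟨?_, ?_⟩⟩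
  · have hKT : 0 ≤ K * (T - δ) := by positivity
    rcases le_total T z.im with h | h
    · have := hY z.re z.im ((le_max_left _ _).trans h)
      rw [Complex.re_add_im] at this
      linarith
    · have h1 := hY z.re T (le_max_left _ _)
      have h2 := hconv.norm_image_sub_le_of_norm_deriv_le (𝕜 := ℂ) (f := g) (C := K)
        (x := (z.re : ℂ) + T * I) (y := z) (fun w hw => hg w (lt_of_lt_of_le hδ hw)) hder
        (show δ ≤ ((z.re : ℂ) + T * I).im by simpa using (by linarith : δ ≤ T)) hz
      have h3 : ‖z - ((z.re : ℂ) + T * I)‖ = T - z.im := by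
        have : z - ((z.re : ℂ) + T * I) = ((z.im - T : ℝ) : ℂ) * I := by
          apply Complex.ext <;> simp
        rw [this, norm_mul, Complex.norm_real, Complex.norm_I, mul_one, Real.norm_eq_abs,
          abs_of_nonpos (by linarith)]
        ring
      rw [h3] at h2
      have h4 := norm_le_norm_add_norm_sub' (g z) (g ((z.re : ℂ) + T * I))
      have h5 : K * (T - z.im) ≤ K * (T - δ) := by gcongr
      linarith
  · have := hder z hz
    have hKT : 0 ≤ K * (T - δ) := by positivity
    linarith

theorem stmt11 (β₀ : ℝ) (g : ℂ → ℂ)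
    (hg : DifferentiableOn ℂ g {z : ℂ | 0 < z.im})
    (hper : ∀ z : ℂ, 0 < z.im → g (z + 1) = g z)
    (hbloch : ∀ z : ℂ, 0 < z.im → 2 * z.im * ‖deriv g z‖ ≤ β₀)
    (hdecay : ∀ ε : ℝ, 0 < ε → ∃ Y : ℝ, ∀ x y : ℝ, Y ≤ y →
      ‖g ((x : ℂ) + (y : ℂ) * Complex.I)‖ < ε)
    (p : ℂ) :
    (∀ y : ℝ, 0 < y → deriv (Ip g p) y ≤ 0) ∧
    AntitoneOn (Ip g p) (Set.Ioi 0) := by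
  have hopen : IsOpen {z : ℂ | 0 < z.im} := isOpen_lt continuous_const continuous_im
  have hg' : ∀ z : ℂ, 0 < z.im → DifferentiableAt ℂ g z :=
    fun z hz => hg.differentiableAt (hopen.mem_nhds hz)
  have hanti : AntitoneOn (Ip g p) (Set.Ioi 0) := by
    intro a ha b hb hab
    have ha' : 0 < a := ha
    have key := aux_main (fun z => Complex.exp (p * g z))
      (fun z hz => ((hg' z hz).const_mul p).cexp)
      (fun z hz => by simp only [hper z hz])
      (fun z => Complex.exp_ne_zero _) ?_ a b ha' hab
    · simpa only [Ip, Complex.norm_exp] using key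
    · intro δ hδ
      obtain ⟨M, hM0, hM⟩ := aux_bound β₀ g hg' hbloch hdecay δ hδ
      have hE : ∀ z : ℂ, δ ≤ z.im → ‖Complex.exp (p * g z)‖ ≤ Real.exp (‖p‖ * M) := by
        intro z hz
        rw [Complex.norm_exp]
        refine Real.exp_le_exp.mpr ((Complex.re_le_norm _).trans ?_)
        rw [norm_mul]
        exact mul_le_mul_of_nonneg_left (hM z hz).1 (norm_nonneg p)
      refine ⟨Real.exp (‖p‖ * M) + Real.exp (‖p‖ * M) * (‖p‖ * M), fun z hz => ⟨?_, ?_⟩⟩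
      · have : 0 ≤ Real.exp (‖p‖ * M) * (‖p‖ * M) := by positivity
        linarith [hE z hz]
      · have hd : HasDerivAt (fun z => Complex.exp (p * g z))
            (Complex.exp (p * g z) * (p * deriv g z)) z :=
          ((hg' z (by linarith)).hasDerivAt.const_mul p).cexp
        rw [hd.deriv, norm_mul, norm_mul]
        have h1 : ‖Complex.exp (p * g z)‖ * (‖p‖ * ‖deriv g z‖)
            ≤ Real.exp (‖p‖ * M) * (‖p‖ * M) := by
          gcongr
          · exact hE z hz
          · exact (hM z hz).2
        linarith [Real.exp_pos (‖p‖ * M)]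
  refine ⟨fun y hy => ?_, hanti⟩
  rw [← derivWithin_of_isOpen isOpen_Ioi (Set.mem_Ioi.mpr hy)]
  exact hanti.derivWithin_nonpos
end

section
/- Let μ : ℂ → ℂ be measurable, vanishing outside the lower half-plane {ζ : Im ζ < 0}, with |μ| ≤ 1 a.e., and let M > 0. Suppose that for every y > 0, the one-dimensional Lebesgue measure of the set {x ∈ ℝ : μ(x − iy) ≠ 0} is at most M. Then for every y > 0, ∫_ℝ y·|Tμ(x+iy)| dx ≤ (8/π)·M. -/
open Complex MeasureTheory Filter Topology Set

/-- The derivative of the Beurling transform of `μ`: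
`Tμ(z) = -(2/π) ∫_{Im ζ < 0} μ(ζ)/(ζ−z)³ dA(ζ)`. -/
noncomputable def Tderiv (μ : ℂ → ℂ) (z : ℂ) : ℂ :=
  -(2 / (Real.pi : ℂ)) * ∫ ζ in {ζ : ℂ | ζ.im < 0}, μ ζ / (ζ - z)^3

/-- The modified Beurling transform
`S^#μ(z) = -(1/π) ∫_{Im ζ<0} μ(ζ)[(ζ−z)⁻² − ζ⁻²] dA(ζ)`. -/
noncomputable def Ssharp (μ : ℂ → ℂ) (z : ℂ) : ℂ :=
  -(1 / (Real.pi : ℂ)) * ∫ ζ in {ζ : ℂ | ζ.im < 0}, μ ζ * (((ζ - z)^2)⁻¹ - (ζ^2)⁻¹)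

/-- The asymptotic variance over `[0,1]` of a function on the upper half-plane:
`σ²_{[0,1]}(b) = limsup_{y→0⁺} (1/log(1/y)) ∫₀¹ |b(x+iy)|² dx`. -/
noncomputable def sigma01 (b : ℂ → ℂ) : ℝ :=
  Filter.limsup (fun y : ℝ =>
    (1 / Real.log (1 / y)) *
      ∫ x in (0:ℝ)..1, ‖b ((x : ℂ) + (y : ℂ) * Complex.I)‖^2) (𝓝[>] (0:ℝ))

/-- `Σ²_ℍ`: the supremum of `σ²_{[0,1]}(S^#μ)` over all measurable `μ` with
`|μ| ≤ 1` a.e. supported in the lower half-plane. -/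
noncomputable def SigmaSqH : ℝ :=
  sSup {v : ℝ | ∃ μ : ℂ → ℂ, Measurable μ ∧ (∀ᵐ ζ : ℂ, ‖μ ζ‖ ≤ 1) ∧
    (∀ ζ : ℂ, 0 ≤ ζ.im → μ ζ = 0) ∧ v = sigma01 (Ssharp μ)}

lemma aux_x (ζ : ℂ) (y : ℝ) (hs : 0 < y - ζ.im) :
    ∫⁻ x : ℝ, ENNReal.ofReal (1 / ‖ζ - ((x : ℂ) + (y : ℂ) * Complex.I)‖ ^ 3)
      ≤ ENNReal.ofReal (Real.pi / (y - ζ.im) ^ 2) := by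
  set s := y - ζ.im with hsdef
  have hint : Integrable (fun x : ℝ => (s ^ 3)⁻¹ * (1 + ((x - ζ.re) / s) ^ 2)⁻¹) := by
    have h1 := (integrable_inv_one_add_sq.comp_div hs.ne').comp_sub_right ζ.re
    exact h1.const_mul _
  have hval : ∫ x : ℝ, (s ^ 3)⁻¹ * (1 + ((x - ζ.re) / s) ^ 2)⁻¹ = Real.pi / s ^ 2 := by
    rw [integral_const_mul]
    rw [integral_sub_right_eq_self (fun x : ℝ => (1 + (x / s) ^ 2)⁻¹) ζ.re]
    rw [Measure.integral_comp_div (fun x : ℝ => (1 + x ^ 2)⁻¹) s]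
    rw [integral_univ_inv_one_add_sq, abs_of_pos hs, smul_eq_mul]
    field_simp
  rw [← hval, ofReal_integral_eq_lintegral_ofReal hint
    (Eventually.of_forall fun x => by positivity)]
  refine lintegral_mono fun x => ENNReal.ofReal_le_ofReal ?_
  set w := ζ - ((x : ℂ) + (y : ℂ) * Complex.I) with hw
  have him : w.im = -s := by simp [hw, hsdef]
  have hre : w.re = ζ.re - x := by simp [hw]
  have h1 : s ≤ ‖w‖ := by
    have := Complex.abs_im_le_norm w
    rwa [him, abs_neg, abs_of_pos hs] at this
  have h2 : ‖w‖ ^ 2 = (x - ζ.re) ^ 2 + s ^ 2 := by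
    rw [Complex.sq_norm, Complex.normSq_apply, him, hre]; ring
  have h3 : (s ^ 3)⁻¹ * (1 + ((x - ζ.re) / s) ^ 2)⁻¹ = 1 / (s * ‖w‖ ^ 2) := by
    rw [h2]
    have : 0 < (x - ζ.re) ^ 2 + s ^ 2 := by positivity
    have h4 : 1 + ((x - ζ.re) / s) ^ 2 = ((x - ζ.re) ^ 2 + s ^ 2) / s ^ 2 := by
      field_simp; ring
    rw [h4]; field_simp
  rw [h3]
  have hwp : 0 < ‖w‖ := hs.trans_le h1
  apply one_div_le_one_div_of_le (by positivity)
  nlinarith [sq_nonneg ‖w‖, mul_le_mul_of_nonneg_right h1 (sq_nonneg ‖w‖)]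

lemma aux_t (y : ℝ) (hy : 0 < y) :
    ∫⁻ v in Iio (0:ℝ), ENNReal.ofReal (Real.pi / (y - v) ^ 2) ≤ ENNReal.ofReal (Real.pi / y) := by
  have hd : ∀ v ∈ Ici (0:ℝ), HasDerivAt (fun v : ℝ => -(Real.pi / (y + v)))
      (Real.pi / (y + v) ^ 2) v := by
    intro v hv
    have hne : y + v ≠ 0 := by have : 0 ≤ v := hv; linarith
    have h := ((hasDerivAt_const v Real.pi).fun_div ((hasDerivAt_id' v).const_add y) hne).fun_neg
    refine h.congr_deriv ?_
    field_simp
    ring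
  have ht : Tendsto (fun v : ℝ => -(Real.pi / (y + v))) atTop (𝓝 0) := by
    rw [← neg_zero]
    exact (Tendsto.div_atTop tendsto_const_nhds
      (tendsto_atTop_add_const_left _ y tendsto_id)).neg
  have hi : IntegrableOn (fun v : ℝ => Real.pi / (y + v) ^ 2) (Ioi 0) :=
    integrableOn_Ioi_deriv_of_nonneg' hd (fun v _ => by positivity) ht
  have hv := integral_Ioi_of_hasDerivAt_of_tendsto' hd hi ht
  have hv' : ∫ v in Ioi (0:ℝ), Real.pi / (y + v) ^ 2 = Real.pi / y := by rw [hv]; simp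
  rw [← hv', ofReal_integral_eq_lintegral_ofReal hi (Eventually.of_forall fun x => by positivity)]
  rw [← lintegral_indicator measurableSet_Iio, ← lintegral_indicator measurableSet_Ioi,
    ← lintegral_neg_eq_self]
  refine lintegral_mono fun v => ?_
  simp [indicator_apply]

theorem stmt12 (μ : ℂ → ℂ) (hmeas : Measurable μ)
    (hbd : ∀ᵐ ζ : ℂ, ‖μ ζ‖ ≤ 1) (hsupp : ∀ ζ : ℂ, 0 ≤ ζ.im → μ ζ = 0)
    (M : ℝ) (hM : 0 < M)
    (hline : ∀ y : ℝ, 0 < y →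
      volume {x : ℝ | μ ((x : ℂ) - (y : ℂ) * Complex.I) ≠ 0} ≤ ENNReal.ofReal M) :
    ∀ y : ℝ, 0 < y →
      ∫⁻ x : ℝ, ENNReal.ofReal (y * ‖Tderiv μ ((x : ℂ) + (y : ℂ) * Complex.I)‖)
        ≤ ENNReal.ofReal ((8 / Real.pi) * M) := by
  intro y hy
  have hpi := Real.pi_pos
  set A : Set ℂ := {ζ | μ ζ ≠ 0} with hA
  have hAm : MeasurableSet A := (hmeas (measurableSet_singleton 0)).compl
  set K : ℝ → ℂ → ENNReal := fun x ζ =>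
    ENNReal.ofReal (1 / ‖ζ - ((x : ℂ) + (y : ℂ) * Complex.I)‖ ^ 3) with hK
  have hKm : Measurable (Function.uncurry K) := by
    simp only [hK, Function.uncurry_def]
    fun_prop
  -- pointwise bound
  have step1 : ∀ x : ℝ, ENNReal.ofReal (y * ‖Tderiv μ ((x : ℂ) + (y : ℂ) * Complex.I)‖)
      ≤ ENNReal.ofReal (y * (2 / Real.pi)) * ∫⁻ ζ in A, K x ζ := by
    intro x
    have hn : ‖Tderiv μ ((x : ℂ) + (y : ℂ) * Complex.I)‖ = (2 / Real.pi) *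
        ‖∫ ζ in {ζ : ℂ | ζ.im < 0}, μ ζ / (ζ - ((x : ℂ) + (y : ℂ) * Complex.I))^3‖ := by
      rw [Tderiv, norm_mul, norm_neg, norm_div, Complex.norm_real, Real.norm_of_nonneg hpi.le]
      simp
    rw [hn, ← mul_assoc, ENNReal.ofReal_mul (by positivity), ofReal_norm]
    gcongr
    refine (enorm_integral_le_lintegral_enorm _).trans ?_
    refine (setLIntegral_le_lintegral _ _).trans ?_
    rw [← lintegral_indicator hAm]
    refine lintegral_mono_ae ?_
    filter_upwards [hbd] with ζ hζ
    by_cases h0 : ζ ∈ A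
    · rw [indicator_of_mem h0, ← ofReal_norm, hK]
      apply ENNReal.ofReal_le_ofReal
      rw [norm_div, norm_pow]
      gcongr
    · rw [indicator_of_notMem h0]
      have : μ ζ = 0 := by simpa [hA] using h0
      simp [this]
  have step2 : ∫⁻ x : ℝ, ∫⁻ ζ in A, K x ζ ≤
      ∫⁻ ζ in A, ENNReal.ofReal (Real.pi / (y - ζ.im) ^ 2) := by
    rw [lintegral_lintegral_swap hKm.aemeasurable]
    refine setLIntegral_mono' hAm fun ζ hζ => aux_x ζ y ?_
    have : ζ.im < 0 := by
      by_contra h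
      exact hζ (hsupp ζ (not_lt.mp h))
    linarith
  have step3 : ∫⁻ ζ in A, ENNReal.ofReal (Real.pi / (y - ζ.im) ^ 2) ≤
      ENNReal.ofReal M * ENNReal.ofReal (Real.pi / y) := by
    rw [← lintegral_indicator hAm]
    have hfm : Measurable (A.indicator fun ζ : ℂ => ENNReal.ofReal (Real.pi / (y - ζ.im) ^ 2)) := by
      refine Measurable.indicator ?_ hAm
      fun_prop
    rw [← Complex.volume_preserving_equiv_real_prod.symm.lintegral_comp hfm]
    rw [Measure.volume_eq_prod, lintegral_prod_symm' (fun p : ℝ × ℝ => A.indicator (fun ζ : ℂ => ENNReal.ofReal (Real.pi / (y - ζ.im) ^ 2))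
        (Complex.measurableEquivRealProd.symm p)) (hfm.comp (MeasurableEquiv.measurable _))]
    calc _ ≤ ∫⁻ v : ℝ, (Iio (0:ℝ)).indicator
          (fun v => ENNReal.ofReal M * ENNReal.ofReal (Real.pi / (y - v) ^ 2)) v := by
          refine lintegral_mono fun v => ?_
          by_cases hv : v < 0
          · rw [indicator_of_mem (show v ∈ Iio 0 from hv)]
            have hl := hline (-v) (by linarith)
            set B : Set ℝ := {x : ℝ | μ ((x : ℂ) - ((-v : ℝ) : ℂ) * Complex.I) ≠ 0} with hB
            have hBm : MeasurableSet B := by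
              have : Measurable fun x : ℝ => μ ((x : ℂ) - ((-v : ℝ) : ℂ) * Complex.I) :=
                hmeas.comp (by fun_prop)
              exact (this (measurableSet_singleton 0)).compl
            calc _ = ∫⁻ u : ℝ, B.indicator (fun _ => ENNReal.ofReal (Real.pi / (y - v) ^ 2)) u := by
                  refine lintegral_congr fun u => ?_
                  have he : Complex.measurableEquivRealProd.symm (u, v)
                      = (u : ℂ) - ((-v : ℝ) : ℂ) * Complex.I := by
                    apply Complex.ext <;> simp
                  rw [he]
                  simp only [indicator_apply, hA, hB, mem_setOf_eq]
                  simp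
              _ = ENNReal.ofReal (Real.pi / (y - v) ^ 2) * volume B := by
                  rw [lintegral_indicator_const hBm]
              _ ≤ _ := by rw [mul_comm]; gcongr
          · rw [indicator_of_notMem (show v ∉ Iio 0 from hv)]
            refine le_of_eq ?_
            rw [← lintegral_zero (μ := (volume : Measure ℝ))]
            refine lintegral_congr fun u => indicator_of_notMem ?_ _
            have : μ (Complex.measurableEquivRealProd.symm (u, v)) = 0 :=
              hsupp _ (by simpa using hv)
            simpa [hA] using this
      _ = ENNReal.ofReal M * ∫⁻ v in Iio (0:ℝ), ENNReal.ofReal (Real.pi / (y - v) ^ 2) := by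
          rw [lintegral_indicator measurableSet_Iio, lintegral_const_mul]
          fun_prop
      _ ≤ _ := by gcongr; exact aux_t y hy
  calc _ ≤ ∫⁻ x : ℝ, ENNReal.ofReal (y * (2 / Real.pi)) * ∫⁻ ζ in A, K x ζ := lintegral_mono step1
    _ = ENNReal.ofReal (y * (2 / Real.pi)) * ∫⁻ x : ℝ, ∫⁻ ζ in A, K x ζ :=
        lintegral_const_mul' _ _ ENNReal.ofReal_ne_top
    _ ≤ ENNReal.ofReal (y * (2 / Real.pi)) * (ENNReal.ofReal M * ENNReal.ofReal (Real.pi / y)) := by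
        gcongr; exact step2.trans step3
    _ ≤ _ := by
        rw [← ENNReal.ofReal_mul hM.le, ← ENNReal.ofReal_mul (by positivity)]
        apply ENNReal.ofReal_le_ofReal
        have : y * (2 / Real.pi) * (M * (Real.pi / y)) = 2 * M := by field_simp
        rw [this]
        gcongr
        rw [le_div_iff₀ hpi]
        linarith [Real.pi_le_four]
end

section
/- Let μ : ℂ → ℂ be measurable with |μ| ≤ 1 a.e. on the unit disk 𝔻 and μ = 0 outside 𝔻. Let ξ(w) = e^{−2πiw}, which maps the upper half-plane ℍ onto the exterior disk 𝔻* = {|z| > 1} and the lower half-plane onto 𝔻 \ {0}, and define the pullback ν(w) := μ(ξ(w)) · conj(ξ'(w))/ξ'(w) for Im w < 0 and ν = 0 elsewhere, so that ν vanishes outside the lower half-plane and |ν| ≤ 1 a.e. Define T_𝔻μ(z) := -(2/π)∫_𝔻 μ(ζ)/(ζ−z)³ dA(ζ) for |z| > 1, and T_ℍν(w) := -(2/π)∫_{Im ζ<0} ν(ζ)/(ζ−w)³ dA(ζ) for Im w > 0. Then for every ε > 0 there exists δ > 0 such that for all w ∈ ℍ with Im w < δ, | 2·Im(w)·|T_ℍν(w)|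 − (|ξ(w)|² − 1)·|T_𝔻μ(ξ(w))| | < ε. -/
open Complex MeasureTheory Filter Topology Set

/-- The exponential map `ξ(w) = e^{−2πiw}`, taking the upper half-plane onto the
exterior disk and the lower half-plane onto `𝔻 \ {0}`. -/
noncomputable def xiExp (w : ℂ) : ℂ := Complex.exp (-2 * Real.pi * Complex.I * w)

/-- The pullback Beltrami coefficient
`ν(w) = μ(ξ(w))·conj(ξ'(w))/ξ'(w)` for `Im w < 0`, and `0` elsewhere;
here `ξ'(w) = −2πi·ξ(w)`. -/
noncomputable def nuPull (μ : ℂ → ℂ) (w : ℂ) : ℂ :=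
  if w.im < 0 then
    μ (xiExp w) * (starRingEnd ℂ) (-2 * Real.pi * Complex.I * xiExp w) /
      (-2 * Real.pi * Complex.I * xiExp w)
  else 0

/-- The derivative of the Beurling transform of `μ` supported in the unit disk:
`T_𝔻μ(z) = -(2/π) ∫_𝔻 μ(ζ)/(ζ−z)³ dA(ζ)`. -/
noncomputable def TderivDisk (μ : ℂ → ℂ) (z : ℂ) : ℂ :=
  -(2 / (Real.pi : ℂ)) * ∫ ζ in Metric.ball (0:ℂ) 1, μ ζ / (ζ - z)^3

/-- The derivative of the Beurling transform of `ν` supported in the lower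
half-plane: `T_ℍν(w) = -(2/π) ∫_{Im ζ<0} ν(ζ)/(ζ−w)³ dA(ζ)`. -/
noncomputable def TderivHalf (ν : ℂ → ℂ) (w : ℂ) : ℂ :=
  -(2 / (Real.pi : ℂ)) * ∫ ζ in {ζ : ℂ | ζ.im < 0}, ν ζ / (ζ - w)^3

lemma xi_hasDeriv (η : ℂ) : HasDerivAt xiExp (-2 * Real.pi * Complex.I * xiExp η) η := by
  have h : HasDerivAt (fun w : ℂ => -2 * (Real.pi:ℂ) * Complex.I * w) (-2 * Real.pi * Complex.I) η := by
    simpa using (hasDerivAt_id η).const_mul (-2 * (Real.pi:ℂ) * Complex.I)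
  have := h.cexp
  rw [mul_comm (cexp _)] at this
  exact this

lemma xi_ne (η : ℂ) : xiExp η ≠ 0 := Complex.exp_ne_zero _

lemma xi_norm (η : ℂ) : ‖xiExp η‖ = Real.exp (2 * Real.pi * η.im) := by
  unfold xiExp
  rw [Complex.norm_exp]
  congr 1
  simp

lemma xi_cont : Continuous xiExp := by
  unfold xiExp; fun_prop

/-- the derivative of `xiExp` -/
noncomputable def dxi (η : ℂ) : ℂ := -2 * Real.pi * Complex.I * xiExp η

lemma dxi_ne (η : ℂ) : dxi η ≠ 0 := by
  unfold dxi
  have := xi_ne η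
  simp [this, Real.pi_ne_zero]

/-- real Frechet derivative of `xiExp` -/
noncomputable def fxi (η : ℂ) : ℂ →L[ℝ] ℂ :=
  (ContinuousLinearMap.toSpanSingleton ℂ (dxi η)).restrictScalars ℝ

lemma fxi_has (η : ℂ) : HasFDerivAt xiExp (fxi η) η :=
  (xi_hasDeriv η).hasFDerivAt.restrictScalars ℝ

lemma fxi_det (η : ℂ) : (fxi η).det = normSq (dxi η) := by
  have h1 : (fxi η : ℂ →ₗ[ℝ] ℂ) = LinearMap.restrictScalars ℝ (LinearMap.toSpanSingleton ℂ ℂ (dxi η)) := rfl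
  unfold ContinuousLinearMap.det
  rw [h1, LinearMap.det_restrictScalars, Algebra.norm_complex_eq]
  simp

/-- fundamental strip -/
def strip (u : ℝ) : Set ℂ := {η | u - 1/2 ≤ η.re ∧ η.re < u + 1/2 ∧ η.im < 0}

lemma strip_meas (u : ℝ) : MeasurableSet (strip u) := by
  refine MeasurableSet.inter (measurableSet_le measurable_const measurable_re) (MeasurableSet.inter (measurableSet_lt measurable_re measurable_const) (measurableSet_lt measurable_im measurable_const))

lemma xi_eq_iff {a b : ℂ} : xiExp a = xiExp b ↔ ∃ n : ℤ, a = b + n := by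
  unfold xiExp
  rw [exp_eq_exp_iff_exists_int]
  have hpi : (Real.pi : ℂ) ≠ 0 := by exact_mod_cast Real.pi_ne_zero
  constructor
  · rintro ⟨n, hn⟩
    refine ⟨-n, ?_⟩
    have : (-2 * (Real.pi:ℂ) * I) * a = (-2 * (Real.pi:ℂ) * I) * (b + (-n : ℤ)) := by
      push_cast; linear_combination hn
    exact mul_left_cancel₀ (by simp [hpi]) this
  · rintro ⟨n, rfl⟩
    exact ⟨-n, by push_cast; ring⟩

lemma xi_inj (u : ℝ) : InjOn xiExp (strip u) := by
  intro a ha b hb hab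
  obtain ⟨n, rfl⟩ := xi_eq_iff.1 hab
  obtain ⟨h1, h2, -⟩ := ha
  obtain ⟨h3, h4, -⟩ := hb
  simp at h1 h2
  have a1 : (n:ℝ) < 1 := by linarith
  have a2 : (-1:ℝ) < n := by linarith
  have : n = 0 := by
    have b1 : n < 1 := by exact_mod_cast a1
    have b2 : -1 < n := by exact_mod_cast a2
    omega
  simp [this]

lemma exists_shift (u : ℝ) (η : ℂ) (h : η.im < 0) : ∃ n : ℤ, η + n ∈ strip u := by
  refine ⟨-⌊η.re - (u - 1/2)⌋, ?_⟩
  have h1 := Int.floor_le (η.re - (u - 1/2))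
  have h2 := Int.lt_floor_add_one (η.re - (u - 1/2))
  refine ⟨?_, ?_, ?_⟩
  · rw [add_re, intCast_re]; push_cast; linarith
  · rw [add_re, intCast_re]; push_cast; linarith
  · simpa using h

lemma xi_image (u : ℝ) : xiExp '' (strip u) = Metric.ball 0 1 \ {0} := by
  ext ζ
  constructor
  · rintro ⟨η, ⟨-, -, h⟩, rfl⟩
    refine ⟨?_, xi_ne η⟩
    rw [mem_ball_zero_iff, xi_norm]
    rw [Real.exp_lt_one_iff]
    nlinarith [Real.pi_pos]
  · rintro ⟨h1, h2⟩
    have hpi : (Real.pi : ℂ) ≠ 0 := by exact_mod_cast Real.pi_ne_zero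
    have hz : ζ ≠ 0 := h2
    set η := Complex.log ζ / (-2 * Real.pi * I) with hη
    have hx : xiExp η = ζ := by
      unfold xiExp
      rw [hη, mul_div_cancel₀ _ (by simp [hpi]), Complex.exp_log hz]
    have him : η.im < 0 := by
      rw [mem_ball_zero_iff, ← hx, xi_norm, Real.exp_lt_one_iff] at h1
      by_contra hc
      push Not at hc
      nlinarith [mul_nonneg Real.pi_pos.le hc]
    obtain ⟨n, hn⟩ := exists_shift u η him
    exact ⟨_, hn, by rw [← hx]; exact xi_eq_iff.2 ⟨n, rfl⟩⟩

lemma xi_null {N : Set ℂ} (hN : MeasurableSet N) (h0 : volume N = 0) :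
    ∀ᵐ η : ℂ, η.im < 0 → xiExp η ∉ N := by
  have key : ∀ u : ℝ, volume (strip u ∩ xiExp ⁻¹' N) = 0 := by
    intro u
    have hm : MeasurableSet (strip u ∩ xiExp ⁻¹' N) := (strip_meas u).inter (xi_cont.measurable hN)
    have h := lintegral_abs_det_fderiv_eq_addHaar_image volume hm
      (fun x _ => (fxi_has x).hasFDerivWithinAt) ((xi_inj u).mono inter_subset_left)
    have h2 : volume (xiExp '' (strip u ∩ xiExp ⁻¹' N)) = 0 := by
      refine measure_mono_null ?_ h0
      rintro _ ⟨x, ⟨-, hx⟩, rfl⟩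
      exact hx
    rw [h2] at h
    simp only [fxi_det] at h
    have hmeas : Measurable fun x => ENNReal.ofReal |normSq (dxi x)| := by
      have : Continuous fun x => |normSq (dxi x)| := by
        unfold dxi
        have := xi_cont
        fun_prop
      exact this.measurable.ennreal_ofReal
    rw [setLIntegral_eq_zero_iff hm hmeas] at h
    rw [measure_eq_zero_iff_ae_notMem]
    filter_upwards [h] with x hx hx'
    have := hx hx'
    simp at this
    exact dxi_ne x this
  have hall : ∀ᵐ η : ℂ, ∀ n : ℤ, η ∉ strip n ∩ xiExp ⁻¹' N := by
    rw [ae_all_iff]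
    intro n
    exact measure_eq_zero_iff_ae_notMem.1 (key n)
  filter_upwards [hall] with η hη him hc
  obtain ⟨n, hn⟩ := exists_shift 0 η him
  refine hη (-n) ⟨?_, hc⟩
  obtain ⟨h1, h2, h3⟩ := hn
  simp at h1 h2
  refine ⟨?_, ?_, him⟩ <;> push_cast <;> linarith

lemma nu_meas {μ : ℂ → ℂ} (hmeas : Measurable μ) : Measurable (nuPull μ) := by
  unfold nuPull
  have hx := xi_cont.measurable
  refine Measurable.ite (measurableSet_lt measurable_im measurable_const) ?_ measurable_const
  have h1 : Measurable fun w => -2 * (Real.pi:ℂ) * I * xiExp w := by fun_prop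
  exact ((hmeas.comp hx).mul (Complex.continuous_conj.measurable.comp h1)).div h1

lemma nu_bd {μ : ℂ → ℂ} (hmeas : Measurable μ) (hbd : ∀ᵐ ζ : ℂ, ‖μ ζ‖ ≤ 1) :
    ∀ᵐ η : ℂ, ‖nuPull μ η‖ ≤ 1 := by
  have hN : MeasurableSet {ζ | ¬ ‖μ ζ‖ ≤ 1} := (measurableSet_le hmeas.norm measurable_const).compl
  filter_upwards [xi_null hN hbd] with η hη
  unfold nuPull
  split_ifs with h
  · have := hη h
    simp only [not_not] at this
    rw [norm_div, norm_mul, RCLike.norm_conj, mul_div_assoc, div_self, mul_one]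
    · exact this
    · exact norm_ne_zero_iff.2 (dxi_ne η)
  · simp

/-- transported kernel -/
noncomputable def KK (w η : ℂ) : ℂ := dxi w * dxi η ^ 2 / (xiExp η - xiExp w)^3

lemma disk_cv (μ : ℂ → ℂ) (w : ℂ) :
    dxi w * ∫ ζ in Metric.ball (0:ℂ) 1, μ ζ / (ζ - xiExp w)^3 =
      ∫ η in strip w.re, nuPull μ η * KK w η := by
  have e : (Metric.ball (0:ℂ) 1 \ {0} : Set ℂ) =ᵐ[volume] Metric.ball (0:ℂ) 1 :=
    sdiff_null_ae_eq_self (measure_singleton _)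
  rw [← setIntegral_congr_set e, ← xi_image w.re,
    integral_image_eq_integral_abs_det_fderiv_smul volume (strip_meas w.re)
      (fun x _ => (fxi_has x).hasFDerivWithinAt) (xi_inj w.re), ← integral_const_mul]
  refine setIntegral_congr_fun (strip_meas _) (fun η hη => ?_)
  have hd := dxi_ne η
  simp only [fxi_det, abs_of_nonneg (normSq_nonneg _), nuPull, if_pos hη.2.2, KK, real_smul]
  change _ = μ (xiExp η) * (starRingEnd ℂ) (dxi η) / dxi η * _
  rw [normSq_eq_conj_mul_self]
  field_simp

lemma KK_eq (w η : ℂ) : KK w η = (-2 * Real.pi * I)^3 *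
    (exp (-2 * Real.pi * I * (η - w)) ^ 2 / (exp (-2 * Real.pi * I * (η - w)) - 1)^3) := by
  have h : xiExp η = xiExp w * exp (-2 * Real.pi * I * (η - w)) := by
    unfold xiExp; rw [← exp_add]; congr 1; ring
  unfold KK dxi
  rw [h]
  set E := exp (-2 * Real.pi * I * (η - w))
  have h0 := xi_ne w
  have : xiExp w * E - xiExp w = xiExp w * (E - 1) := by ring
  rw [this, mul_pow (xiExp w) (E - 1), ← mul_div_assoc,
    ← mul_div_mul_left ((-2 * (Real.pi:ℂ) * I)^3 * E^2) _ (pow_ne_zero 3 h0)]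
  congr 1
  ring

lemma KK_meas (w : ℂ) : Measurable (KK w) := by
  unfold KK dxi
  have hx := xi_cont.measurable
  exact ((hx.const_mul _).pow_const 2 |>.const_mul _).div ((hx.sub_const _).pow_const 3)

lemma kern_lower_a {s : ℂ} (ha : s.re < 0) (ha1 : -1 ≤ s.re) (hb : |s.im| ≤ Real.pi) :
    ‖s‖ / 3 ≤ ‖exp s - 1‖ := by
  have h1 : ‖exp s - 1‖^2 = (1 - Real.exp s.re)^2 + 2 * Real.exp s.re * (1 - Real.cos s.im) := by
    rw [← Complex.normSq_eq_norm_sq, Complex.normSq_apply]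
    simp only [sub_re, sub_im, exp_re, exp_im, one_re, one_im]
    have := Real.sin_sq_add_cos_sq s.im
    linear_combination (Real.exp s.re)^2 * this
  have h2 : ‖s‖^2 = s.re^2 + s.im^2 := by
    rw [← Complex.normSq_eq_norm_sq, Complex.normSq_apply]; ring
  have h3 := Real.cos_le_one_sub_mul_cos_sq hb
  have h4 : 1/3 ≤ Real.exp s.re := by
    have e1 : Real.exp (-1) ≤ Real.exp s.re := Real.exp_le_exp.2 ha1
    have e2 : Real.exp 1 < 3 := lt_trans Real.exp_one_lt_d9 (by norm_num)
    have e3 : Real.exp (-1) * Real.exp 1 = 1 := by rw [← Real.exp_add]; simp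
    nlinarith [Real.exp_pos (-1)]
  have h5 : -s.re / 2 ≤ 1 - Real.exp s.re := by
    have e1 := Real.add_one_le_exp (-s.re)
    have e3 : Real.exp (s.re) * Real.exp (-s.re) = 1 := by rw [← Real.exp_add]; simp
    have e4 : Real.exp s.re * (1 - s.re) ≤ 1 := by nlinarith [Real.exp_pos s.re]
    nlinarith [Real.exp_pos s.re]
  have h6 : 1 / 6 ≤ 2 / Real.pi^2 := by
    rw [div_le_div_iff₀ (by norm_num) (by positivity)]
    nlinarith [Real.pi_lt_d2, Real.pi_pos]
  have h7 : s.im^2 / 6 ≤ 1 - Real.cos s.im := by nlinarith [sq_nonneg s.im]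
  have h8 : s.im^2/9 ≤ 2 * Real.exp s.re * (1 - Real.cos s.im) := by nlinarith [sq_nonneg s.im]
  refine le_of_sq_le_sq ?_ (norm_nonneg _)
  rw [h1, div_pow, h2]
  nlinarith

lemma kern_bound : ∃ C : ℝ, 0 < C ∧ ∀ s : ℂ, s.re < 0 → |s.im| ≤ Real.pi →
    ‖exp s ^ 2 / (exp s - 1)^3 - 1 / s^3‖ ≤ C / ‖s‖^2 := by
  set M := Real.exp 5 with hM
  have hM1 : 1 ≤ M := Real.one_le_exp (by norm_num)
  refine ⟨27 * (2 * M^2 + M * (1 + M + M^2)) + 89, by positivity, fun s ha hb => ?_⟩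
  have hs0 : s ≠ 0 := by rintro rfl; simp at ha
  have hsp : 0 < ‖s‖ := norm_pos_iff.2 hs0
  have h2 : ‖s‖^2 = s.re^2 + s.im^2 := by
    rw [← Complex.normSq_eq_norm_sq, Complex.normSq_apply]; ring
  have him : s.im^2 ≤ 10 := by
    rw [← sq_abs]; nlinarith [Real.pi_lt_d2, Real.pi_pos, abs_nonneg s.im]
  rcases le_total (-1) s.re with h | h
  · have hlow := kern_lower_a ha h hb
    have hE0 : exp s - 1 ≠ 0 := by
      intro h0; rw [h0, norm_zero] at hlow; linarith
    have hs5 : ‖s‖ ≤ 5 := by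
      refine le_of_sq_le_sq ?_ (by norm_num)
      nlinarith
    have hex : Real.exp ‖s‖ ≤ M := Real.exp_le_exp.2 hs5
    have b1 : ‖exp s - 1 - s‖ ≤ ‖s‖^2 * M := by
      have := Complex.norm_exp_sub_sum_le_norm_mul_exp s 2
      simp [Finset.sum_range_succ] at this
      rw [sub_sub]
      exact this.trans (by gcongr)
    have b2 : ‖exp s - 1‖ ≤ ‖s‖ * M := by
      have := Complex.norm_exp_sub_sum_le_norm_mul_exp s 1
      simp at this
      exact this.trans (by gcongr)
    have b3 : ‖exp s ^ 2 - 1‖ ≤ 2 * ‖s‖ * M^2 := by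
      have e : exp s ^ 2 - 1 = (exp s - 1) * (exp s + 1) := by ring
      rw [e, norm_mul]
      have : ‖exp s + 1‖ ≤ 2 := by
        refine (norm_add_le _ _).trans ?_
        have : ‖exp s‖ ≤ 1 := by rw [Complex.norm_exp]; exact Real.exp_le_one_iff.2 ha.le
        simp; linarith
      calc ‖exp s - 1‖ * ‖exp s + 1‖ ≤ (‖s‖ * M) * 2 := by gcongr
        _ ≤ 2 * ‖s‖ * M^2 := by nlinarith [mul_nonneg hsp.le (sub_nonneg.2 hM1), mul_nonneg (mul_nonneg hsp.le (sub_nonneg.2 hM1)) (zero_le_one.trans hM1)]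
    set E := exp s - 1 with hE
    have key : exp s ^ 2 / E^3 - 1 / s^3 = (s^3 * (exp s ^2 - 1) - (E - s) * (s^2 + s * E + E^2)) / (s^3 * E^3) := by
      field_simp; ring
    have num : ‖s^3 * (exp s ^2 - 1) - (E - s) * (s^2 + s * E + E^2)‖ ≤ (2 * M^2 + M * (1 + M + M^2)) * ‖s‖^4 := by
      refine (norm_sub_le _ _).trans ?_
      have q : ‖s^2 + s * E + E^2‖ ≤ ‖s‖^2 + ‖s‖ * (‖s‖ * M) + (‖s‖*M)^2 := by
        refine (norm_add₃_le).trans ?_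
        rw [norm_pow, norm_mul, norm_pow]; gcongr
      rw [norm_mul, norm_mul, norm_pow]
      calc _ ≤ ‖s‖^3 * (2 * ‖s‖ * M^2) + (‖s‖^2 * M) * (‖s‖^2 + ‖s‖ * (‖s‖ * M) + (‖s‖*M)^2) := by gcongr
        _ = _ := by ring
    rw [key, norm_div, norm_mul, norm_pow, norm_pow]
    have den : ‖s‖^6 / 27 ≤ ‖s‖^3 * ‖E‖^3 := by
      calc ‖s‖^6 / 27 = ‖s‖^3 * (‖s‖/3)^3 := by ring
        _ ≤ _ := by gcongr
    calc _ ≤ (2 * M^2 + M * (1 + M + M^2)) * ‖s‖^4 / (‖s‖^6 / 27) := by gcongr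
      _ = 27 * (2 * M^2 + M * (1 + M + M^2)) / ‖s‖^2 := by field_simp
      _ ≤ _ := by gcongr; linarith
  · have e0 := Real.exp_pos s.re
    have e1 := Real.add_one_le_exp (-s.re)
    have e3 : Real.exp (s.re) * Real.exp (-s.re) = 1 := by rw [← Real.exp_add]; simp
    have e4 : Real.exp s.re * (1 - s.re) ≤ 1 := by nlinarith
    have e5 : Real.exp s.re ≤ 1/2 := by nlinarith
    have e6 : Real.exp s.re * (- s.re) ≤ 1 := by nlinarith
    have e7 : Real.exp s.re ^2 * s.re^2 ≤ 1 := by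
      have e8 : (Real.exp s.re * (- s.re))^2 ≤ 1 := pow_le_one₀ (by nlinarith) e6
      linarith [mul_pow (Real.exp s.re) (-s.re) 2, neg_sq s.re]
    have hE : 1/2 ≤ ‖exp s - 1‖ := by
      have := norm_sub_norm_le (1:ℂ) (exp s)
      rw [norm_sub_rev, Complex.norm_exp, norm_one] at this
      linarith
    have hs1 : 1 ≤ ‖s‖ := by
      refine le_of_sq_le_sq ?_ (norm_nonneg _)
      nlinarith [sq_nonneg s.im]
    have t1 : ‖exp s ^ 2 / (exp s - 1)^3‖ ≤ 88 / ‖s‖^2 := by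
      rw [norm_div, norm_pow, norm_pow, Complex.norm_exp]
      have : Real.exp s.re ^2 ≤ 11 / ‖s‖^2 := by
        rw [le_div_iff₀ (by positivity), h2]
        nlinarith [sq_nonneg (Real.exp s.re), mul_le_mul_of_nonneg_left him (sq_nonneg (Real.exp s.re)), mul_le_mul_of_nonneg_left (show 1 ≤ s.re^2 by nlinarith) (sq_nonneg (Real.exp s.re))]
      calc _ ≤ (11 / ‖s‖^2) / (1/2)^3 := by gcongr
        _ = _ := by ring
    have t2 : ‖1 / s^3‖ ≤ 1 / ‖s‖^2 := by
      rw [norm_div, norm_pow, norm_one]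
      gcongr
      norm_num
    refine (norm_sub_le _ _).trans ((add_le_add t1 t2).trans ?_)
    rw [← add_div]
    refine div_le_div_of_nonneg_right ?_ (by positivity)
    have : 0 ≤ 27 * (2 * M^2 + M * (1 + M + M^2)) := by positivity
    linarith

/-- horizontal majorant -/
noncomputable def phiM (r : ℝ) : ℝ :=
  if |r| < 1/2 then |r| ^ (-1/2 : ℝ) else |r| ^ (-3/2 : ℝ)

/-- vertical majorant -/
noncomputable def gM (y : ℝ) : ℝ → ℝ := (Ioi y).indicator (fun t => t ^ (-3/2 : ℝ))

lemma phiM_nonneg (r : ℝ) : 0 ≤ phiM r := by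
  unfold phiM; split_ifs <;> positivity

lemma phiM_int_Ioi : IntegrableOn phiM (Ioi 0) := by
  have : Ioi (0:ℝ) = Ioo 0 (1/2) ∪ Ici (1/2) := by
    rw [Ioo_union_Ici_eq_Ioi]; norm_num
  rw [this]
  refine IntegrableOn.union ?_ ?_
  · have h : IntegrableOn (fun x : ℝ => x ^ (-1/2:ℝ)) (Ioo 0 (1/2)) := by
      have := @intervalIntegral.intervalIntegrable_rpow' 0 (1/2) (-1/2) (by norm_num)
      rw [intervalIntegrable_iff_integrableOn_Ioo_of_le (by norm_num)] at this
      exact this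
    refine h.congr_fun (fun x hx => ?_) measurableSet_Ioo
    simp only [phiM, abs_of_pos hx.1, if_pos hx.2]
  · have h : IntegrableOn (fun x : ℝ => x ^ (-3/2:ℝ)) (Ici (1/2)) := by
      rw [integrableOn_Ici_iff_integrableOn_Ioi]
      exact integrableOn_Ioi_rpow_of_lt (by norm_num) (by norm_num)
    refine h.congr_fun (fun x hx => ?_) measurableSet_Ici
    have hx' : (1/2:ℝ) ≤ x := hx
    have h0 : 0 < x := by linarith
    simp only [phiM, abs_of_pos h0, if_neg (not_lt.2 hx')]

lemma phiM_int : Integrable phiM := by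
  have h1 := phiM_int_Ioi
  have h2 : IntegrableOn phiM (Iic 0) := by
    rw [integrableOn_Iic_iff_integrableOn_Iio]
    have := h1.comp_neg
    have e : (fun x => phiM (-x)) = phiM := by
      funext x; simp [phiM]
    rw [e] at this
    simpa using this
  rw [← integrableOn_univ, ← Iic_union_Ioi (a := (0:ℝ))]
  exact h2.union h1

lemma gM_int {y : ℝ} (hy : 0 < y) : Integrable (gM y) :=
  (integrableOn_Ioi_rpow_of_lt (by norm_num) hy).integrable_indicator measurableSet_Ioi

lemma gM_integral {y : ℝ} (hy : 0 < y) : ∫ t, gM y t = 2 * y ^ (-1/2 : ℝ) := by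
  unfold gM
  rw [integral_indicator measurableSet_Ioi, integral_Ioi_rpow_of_lt (by norm_num) hy]
  norm_num
  ring

/-- two dimensional majorant -/
noncomputable def PhiM (w η : ℂ) : ℝ := phiM (η.re - w.re) * gM w.im (w.im - η.im)

lemma PhiM_int {w : ℂ} (hw : 0 < w.im) : Integrable (PhiM w) := by
  have h := (phiM_int.comp_sub_right w.re).mul_prod ((gM_int hw).comp_sub_left w.im)
  exact (Complex.volume_preserving_equiv_real_prod.integrable_comp_emb
    (MeasurableEquiv.measurableEmbedding _)).2 h

lemma PhiM_integral {w : ℂ} (hw : 0 < w.im) :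
    ∫ η, PhiM w η = (∫ r, phiM r) * (2 * w.im ^ (-1/2 : ℝ)) := by
  rw [← gM_integral hw]
  have := integral_prod_mul (μ := (volume : Measure ℝ)) (ν := (volume : Measure ℝ)) (fun x => phiM (x - w.re)) (fun t => gM w.im (w.im - t))
  rw [integral_sub_right_eq_self phiM, integral_sub_left_eq_self (gM w.im) volume w.im] at this
  rw [← this, ← Measure.volume_eq_prod]
  exact Complex.volume_preserving_equiv_real_prod.integral_comp
    (MeasurableEquiv.measurableEmbedding _) (fun z : ℝ × ℝ => phiM (z.1 - w.re) * gM w.im (w.im - z.2))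

lemma ae_re_ne (u : ℝ) : ∀ᵐ η : ℂ, η.re ≠ u := by
  have h : ∀ᵐ z : ℝ × ℝ, z.1 ≠ u :=
    Measure.quasiMeasurePreserving_fst.ae (Measure.ae_ne volume u)
  exact Complex.volume_preserving_equiv_real_prod.quasiMeasurePreserving.ae h

lemma PhiM_lower {w η : ℂ} (hw : 0 < w.im) (hη : η.im < 0) :
    PhiM w η = phiM (η - w).re * (-(η - w).im) ^ (-3/2:ℝ) := by
  simp only [PhiM, gM, sub_re, sub_im, neg_sub]
  rw [indicator_of_mem]
  show w.im < w.im - η.im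
  linarith

lemma pow_split {h : ℂ} (hx : h.re ≠ 0) (ht : 0 < -h.im) {a b : ℝ} (ha : 0 ≤ a) (hb : 0 ≤ b) :
    ‖h‖ ^ (-(a+b)) ≤ |h.re| ^ (-a) * (-h.im) ^ (-b) := by
  have h0 : 0 < ‖h‖ := norm_pos_iff.2 (by rintro rfl; simp at hx)
  rw [neg_add, Real.rpow_add h0]
  have h1 : |h.re| ≤ ‖h‖ := abs_re_le_norm h
  have h2 : -h.im ≤ ‖h‖ := (neg_le_abs _).trans (abs_im_le_norm h)
  have h3 : 0 < |h.re| := abs_pos.2 hx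
  gcongr ?_ * ?_
  · exact Real.rpow_le_rpow_of_nonpos h3 h1 (by linarith)
  · exact Real.rpow_le_rpow_of_nonpos ht h2 (by linarith)

lemma bd_in {h : ℂ} (hx : h.re ≠ 0) (ht : 0 < -h.im) (hx2 : |h.re| ≤ 1/2) :
    1 / ‖h‖^2 ≤ phiM h.re * (-h.im) ^ (-3/2:ℝ) := by
  have := pow_split hx ht (a := 1/2) (b := 3/2) (by norm_num) (by norm_num)
  have e : ‖h‖ ^ (-(1/2 + 3/2 : ℝ)) = 1 / ‖h‖^2 := by
    rw [Real.rpow_neg (norm_nonneg _), one_div, ← Real.rpow_natCast]; norm_num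
  rw [e] at this
  refine this.trans ?_
  have e3 : (-(3/2) : ℝ) = -3/2 := by norm_num
  have e2 : (-(1/2) : ℝ) = -1/2 := by norm_num
  rw [e3, e2]
  gcongr
  unfold phiM
  split_ifs with hlt
  · rfl
  · exact Real.rpow_le_rpow_of_exponent_ge (abs_pos.2 hx) (by linarith) (by norm_num)

lemma bd_out {h : ℂ} (hx : h.re ≠ 0) (ht : 0 < -h.im) (hx2 : 1/2 ≤ |h.re|) :
    1 / ‖h‖^3 ≤ phiM h.re * (-h.im) ^ (-3/2:ℝ) := by
  have := pow_split hx ht (a := 3/2) (b := 3/2) (by norm_num) (by norm_num)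
  have e : ‖h‖ ^ (-(3/2 + 3/2 : ℝ)) = 1 / ‖h‖^3 := by
    rw [Real.rpow_neg (norm_nonneg _), one_div, ← Real.rpow_natCast]; norm_num
  rw [e] at this
  refine this.trans ?_
  have e3 : (-(3/2) : ℝ) = -3/2 := by norm_num
  rw [e3]
  gcongr
  unfold phiM
  rw [if_neg (not_lt.2 hx2)]

lemma bd_all {h : ℂ} {y : ℝ} (hy : 0 < y) (hy1 : y ≤ 1) (hx : h.re ≠ 0) (ht : y < -h.im) :
    1 / ‖h‖^3 ≤ y⁻¹ * (phiM h.re * (-h.im) ^ (-3/2:ℝ)) := by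
  have ht0 : 0 < -h.im := hy.trans ht
  have h0 : 0 < ‖h‖ := norm_pos_iff.2 (by rintro rfl; simp at hx)
  have hP : 0 ≤ phiM h.re * (-h.im) ^ (-3/2:ℝ) := mul_nonneg (phiM_nonneg _) (by positivity)
  rcases le_total |h.re| (1/2) with h1 | h1
  · have b := bd_in hx ht0 h1
    have h2 : y ≤ ‖h‖ := ht.le.trans ((neg_le_abs _).trans (abs_im_le_norm h))
    calc 1 / ‖h‖^3 = ‖h‖⁻¹ * (1 / ‖h‖^2) := by field_simp
      _ ≤ _ := by gcongr
  · refine (bd_out hx ht0 h1).trans (le_mul_of_one_le_left hP ?_)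
    exact (one_le_inv₀ hy).2 hy1

lemma scale_aux {c h : ℂ} (hc : c ≠ 0) (hh : h ≠ 0) (X : ℂ) :
    c^3 * X - 1 / h^3 = c^3 * (X - 1 / (c * h)^3) := by
  field_simp

lemma diff_bound : ∃ C : ℝ, 0 < C ∧ ∀ w : ℂ, 0 < w.im → ∀ η : ℂ, η.im < 0 → η.re ≠ w.re →
    ‖1 / (η - w)^3 - (strip w.re).indicator (KK w) η‖ ≤ C * PhiM w η := by
  obtain ⟨C, hC, hK⟩ := kern_bound
  have hpi := Real.pi_pos
  refine ⟨2 * Real.pi * C + 1, by positivity, fun w hw η hη hne => ?_⟩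
  rw [PhiM_lower hw hη]
  have hx : (η - w).re ≠ 0 := by rw [sub_re]; exact sub_ne_zero.2 hne
  have ht : 0 < -(η - w).im := by rw [sub_im]; linarith
  have hP : 0 ≤ phiM (η - w).re * (-(η - w).im) ^ (-3/2:ℝ) :=
    mul_nonneg (phiM_nonneg _) (by positivity)
  by_cases hs : η ∈ strip w.re
  · rw [indicator_of_mem hs, norm_sub_rev, KK_eq]
    obtain ⟨h1, h2, -⟩ := hs
    have hxa : |(η - w).re| ≤ 1/2 := by
      rw [sub_re, abs_le]; constructor <;> linarith
    have b := bd_in hx ht hxa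
    set h := η - w with hh
    have h0 : h ≠ 0 := by intro e; rw [e] at hx; simp at hx
    have hc0 : (-2 * (Real.pi:ℂ) * I) ≠ 0 := by simp [Real.pi_ne_zero]
    have hcn : ‖(-2 * (Real.pi:ℂ) * I)‖ = 2 * Real.pi := by
      simp [abs_of_pos hpi]
    set c := (-2 * (Real.pi:ℂ) * I) with hc
    have k := hK (c * h) (by simp [hc]; nlinarith) (by
      have : (c * h).im = -(2 * Real.pi * h.re) := by simp [hc]
      rw [this, abs_neg, abs_mul, abs_of_pos (by positivity : 0 < 2 * Real.pi)]
      nlinarith)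
    have e : c^3 * (exp (c*h)^2 / (exp (c*h) - 1)^3) - 1 / h^3 =
        c^3 * (exp (c*h)^2 / (exp (c*h) - 1)^3 - 1 / (c*h)^3) := by
      exact scale_aux hc0 h0 _
    rw [e, norm_mul, norm_pow, hcn]
    rw [norm_mul, hcn] at k
    calc _ ≤ (2 * Real.pi)^3 * (C / (2 * Real.pi * ‖h‖)^2) := by gcongr
      _ = 2 * Real.pi * C * (1 / ‖h‖^2) := by
        have : ‖h‖ ≠ 0 := norm_ne_zero_iff.2 h0
        field_simp
      _ ≤ 2 * Real.pi * C * (phiM h.re * (-h.im) ^ (-3/2:ℝ)) := by gcongr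
      _ ≤ _ := by nlinarith
  · rw [indicator_of_notMem hs, sub_zero, norm_div, norm_one, norm_pow]
    have hxa : 1/2 ≤ |(η - w).re| := by
      by_contra hc
      push Not at hc
      rw [sub_re, abs_lt] at hc
      exact hs ⟨by linarith, by linarith, hη⟩
    have b := bd_out hx ht hxa
    have : 0 ≤ 2 * Real.pi * C := by positivity
    nlinarith

lemma integral_bounds {μ : ℂ → ℂ} (hmeas : Measurable μ) (hbd : ∀ᵐ ζ : ℂ, ‖μ ζ‖ ≤ 1) :
    ∃ M : ℝ, 0 < M ∧ ∀ w : ℂ, 0 < w.im → w.im ≤ 1 →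
      ‖∫ ζ in {ζ : ℂ | ζ.im < 0}, nuPull μ ζ / (ζ - w)^3‖ ≤ M * (w.im⁻¹ * w.im ^ (-1/2:ℝ)) ∧
      ‖(∫ ζ in {ζ : ℂ | ζ.im < 0}, nuPull μ ζ / (ζ - w)^3) -
        ∫ η in strip w.re, nuPull μ η * KK w η‖ ≤ M * w.im ^ (-1/2:ℝ) := by
  obtain ⟨C, hC, hD⟩ := diff_bound
  have hI : 0 ≤ ∫ r, phiM r := integral_nonneg phiM_nonneg
  have hH : MeasurableSet {ζ : ℂ | ζ.im < 0} := measurableSet_lt measurable_im measurable_const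
  refine ⟨(C + 1) * ((∫ r, phiM r) * 2) + 1, by positivity, fun w hw hw1 => ?_⟩
  have hy : 0 < w.im ^ (-1/2:ℝ) := by positivity
  have hν := nu_bd hmeas hbd
  have hνm := nu_meas hmeas
  have hPint := PhiM_int hw
  have e1 : ∫ ζ in {ζ : ℂ | ζ.im < 0}, nuPull μ ζ / (ζ - w)^3 = ∫ ζ, nuPull μ ζ / (ζ - w)^3 := by
    refine setIntegral_eq_integral_of_forall_compl_eq_zero (fun x hx => ?_)
    have hx' : ¬ x.im < 0 := hx
    simp [nuPull, hx']
  have e2 : ∫ η in strip w.re, nuPull μ η * KK w η =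
      ∫ η, nuPull μ η * (strip w.re).indicator (KK w) η := by
    rw [← integral_indicator (strip_meas _)]
    congr 1; funext η
    by_cases h : η ∈ strip w.re <;> simp [h]
  have P0 : ∀ η, 0 ≤ PhiM w η := by
    intro η
    refine mul_nonneg (phiM_nonneg _) (indicator_nonneg (fun t ht => ?_) _)
    have : w.im < t := ht
    have : 0 < t := hw.trans this
    positivity
  have bA : ∀ᵐ η : ℂ, ‖nuPull μ η / (η - w)^3‖ ≤ w.im⁻¹ * PhiM w η := by
    filter_upwards [hν, ae_re_ne w.re] with η h1 h2
    by_cases hη : η.im < 0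
    · rw [PhiM_lower hw hη, norm_div, norm_pow]
      refine le_trans ?_ (bd_all hw hw1 (h := η - w) (by rw [sub_re]; exact sub_ne_zero.2 h2)
        (by rw [sub_im]; linarith))
      gcongr
    · have : nuPull μ η = 0 := by simp [nuPull, hη]
      rw [this, zero_div, norm_zero]
      exact mul_nonneg (by positivity) (P0 η)
  have bD : ∀ᵐ η : ℂ, ‖nuPull μ η / (η - w)^3 - nuPull μ η * (strip w.re).indicator (KK w) η‖
      ≤ C * PhiM w η := by
    filter_upwards [hν, ae_re_ne w.re] with η h1 h2
    by_cases hη : η.im < 0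
    · have : nuPull μ η / (η - w)^3 - nuPull μ η * (strip w.re).indicator (KK w) η =
        nuPull μ η * (1 / (η - w)^3 - (strip w.re).indicator (KK w) η) := by ring
      rw [this, norm_mul]
      calc _ ≤ 1 * (C * PhiM w η) := mul_le_mul h1 (hD w hw η hη h2) (norm_nonneg _) zero_le_one
        _ = _ := one_mul _
    · have : nuPull μ η = 0 := by simp [nuPull, hη]
      rw [this, zero_div, zero_mul, sub_zero, norm_zero]
      exact mul_nonneg hC.le (P0 η)
  have mA : Measurable fun η => nuPull μ η / (η - w)^3 :=
    hνm.div ((measurable_id.sub_const _).pow_const 3)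
  have mB : Measurable fun η => nuPull μ η * (strip w.re).indicator (KK w) η :=
    hνm.mul ((KK_meas w).indicator (strip_meas _))
  have iA : Integrable fun η => nuPull μ η / (η - w)^3 :=
    (hPint.const_mul w.im⁻¹).mono' mA.aestronglyMeasurable bA
  have iD : Integrable fun η => nuPull μ η / (η - w)^3 - nuPull μ η * (strip w.re).indicator (KK w) η :=
    (hPint.const_mul C).mono' (mA.sub mB).aestronglyMeasurable bD
  have iB : Integrable fun η => nuPull μ η * (strip w.re).indicator (KK w) η := by
    have := iA.sub iD
    refine this.congr (Eventually.of_forall fun η => ?_)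
    simp
  rw [e1, e2, ← integral_sub iA iB]
  constructor
  · refine (norm_integral_le_of_norm_le (hPint.const_mul w.im⁻¹) bA).trans ?_
    rw [integral_const_mul, PhiM_integral hw]
    have : 0 ≤ w.im⁻¹ * w.im ^ (-1/2:ℝ) := by positivity
    have h3 : 0 ≤ C * ((∫ r, phiM r) * 2) := by positivity
    nlinarith [mul_nonneg h3 this]
  · refine (norm_integral_le_of_norm_le (hPint.const_mul C) bD).trans ?_
    rw [integral_const_mul, PhiM_integral hw]
    have h3 : 0 ≤ ((∫ r, phiM r) * 2) := by positivity
    nlinarith [mul_nonneg h3 hy.le]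

/-- the conformal factor `(|ξ(w)|² - 1)/|ξ'(w)|` as a function of `Im w` -/
noncomputable def bfac (y : ℝ) : ℝ := (Real.exp (2 * Real.pi * y) - Real.exp (-(2 * Real.pi * y))) / (2 * Real.pi)

lemma bfac_bound {y : ℝ} (hy : 0 < y) (hy1 : y ≤ 1/8) : |2 * y - bfac y| ≤ 16 * y^2 := by
  have hpi := Real.pi_pos
  have hpi3 := Real.pi_gt_three
  have hpi4 := Real.pi_lt_four
  set x := 2 * Real.pi * y with hx
  have hx0 : 0 < x := by positivity
  have hx1 : |x| ≤ 1 := by rw [abs_of_pos hx0]; nlinarith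
  have h1 := abs_le.1 (Real.abs_exp_sub_one_sub_id_le hx1)
  have h2 := abs_le.1 (Real.abs_exp_sub_one_sub_id_le (x := -x) (by rwa [abs_neg]))
  have e : 2 * y - bfac y = (2 * x - (Real.exp x - Real.exp (-x))) / (2 * Real.pi) := by
    unfold bfac; rw [hx]; field_simp
  rw [e, abs_div, abs_of_pos (by positivity : 0 < 2 * Real.pi), div_le_iff₀ (by positivity)]
  have : |2 * x - (Real.exp x - Real.exp (-x))| ≤ 2 * x^2 := by
    rw [abs_le]; constructor <;> nlinarith [h1.1, h1.2, h2.1, h2.2]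
  refine this.trans ?_
  rw [hx]
  nlinarith [mul_pos hpi (sq_pos_of_pos hy)]

lemma xi_fac (w : ℂ) (J : ℝ) : (‖xiExp w‖^2 - 1) * J = bfac w.im * (‖dxi w‖ * J) := by
  have hpi := Real.pi_pos
  unfold bfac dxi
  rw [norm_mul, xi_norm]
  have : ‖(-2 * (Real.pi:ℂ) * I)‖ = 2 * Real.pi := by simp [abs_of_pos hpi]
  rw [this, Real.exp_neg]
  have := (Real.exp_pos (2 * Real.pi * w.im)).ne'
  field_simp

theorem stmt13 (μ : ℂ → ℂ) (hmeas : Measurable μ)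
    (hbd : ∀ᵐ ζ : ℂ, ‖μ ζ‖ ≤ 1)
    (hsupp : ∀ ζ : ℂ, ζ ∉ Metric.ball (0:ℂ) 1 → μ ζ = 0) :
    ∀ ε : ℝ, 0 < ε → ∃ δ : ℝ, 0 < δ ∧ ∀ w : ℂ, 0 < w.im → w.im < δ →
      |2 * w.im * ‖TderivHalf (nuPull μ) w‖ -
        (‖xiExp w‖^2 - 1) * ‖TderivDisk μ (xiExp w)‖| < ε := by
  intro ε hε
  obtain ⟨M, hM, hB⟩ := integral_bounds hmeas hbd
  have hlim : Tendsto (fun y : ℝ => 20 * M * Real.sqrt y) (𝓝 0) (𝓝 0) := by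
    have : Continuous fun y : ℝ => 20 * M * Real.sqrt y := by fun_prop
    simpa using this.tendsto 0
  obtain ⟨δ, hδ, hδ2⟩ := Metric.eventually_nhds_iff.1 (hlim.eventually (gt_mem_nhds hε))
  refine ⟨min δ (1/8), by positivity, fun w hw hwδ => ?_⟩
  have hw8 : w.im ≤ 1/8 := (hwδ.trans_le (min_le_right _ _)).le
  have hfin := hδ2 (y := w.im) (by
    rw [Real.dist_eq, sub_zero, abs_of_pos hw]; exact hwδ.trans_le (min_le_left _ _))
  obtain ⟨b1, b2⟩ := hB w hw (by linarith)
  refine lt_of_le_of_lt ?_ hfin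
  unfold TderivHalf TderivDisk
  have hpi := Real.pi_pos
  have hpin : ‖-(2 / (Real.pi:ℂ))‖ = 2 / Real.pi := by
    simp [abs_of_pos hpi]
  have hcv := congrArg norm (disk_cv μ w)
  rw [norm_mul] at hcv
  rw [norm_mul, norm_mul, xi_fac, hpin]
  set A := ∫ ζ in {ζ : ℂ | ζ.im < 0}, nuPull μ ζ / (ζ - w)^3
  set J := ∫ ζ in Metric.ball (0:ℂ) 1, μ ζ / (ζ - xiExp w)^3
  set B := ∫ η in strip w.re, nuPull μ η * KK w η
  set y := w.im
  have e : 2 * y * (2 / Real.pi * ‖A‖) - bfac y * (‖dxi w‖ * (2 / Real.pi * ‖J‖)) =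
      2 / Real.pi * ((2 * y - bfac y) * ‖A‖ + bfac y * (‖A‖ - ‖B‖)) := by
    rw [← hcv]; ring
  have hbf := bfac_bound hw hw8
  have hb4 : |bfac y| ≤ 4 * y := by
    have := abs_le.1 hbf
    rw [abs_le]; constructor <;> nlinarith
  have hAB : |‖A‖ - ‖B‖| ≤ M * y ^ (-1/2:ℝ) := (abs_norm_sub_norm_le A B).trans b2
  have hsq : y * y ^ (-1/2:ℝ) = Real.sqrt y := by
    rw [Real.sqrt_eq_rpow, ← Real.rpow_one_add' hw.le (by norm_num)]; norm_num
  have h2pi : 2 / Real.pi ≤ 1 := by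
    rw [div_le_one hpi]; linarith [Real.pi_gt_three]
  rw [e, abs_mul, abs_of_pos (by positivity : 0 < 2 / Real.pi)]
  calc _ ≤ 1 * |(2 * y - bfac y) * ‖A‖ + bfac y * (‖A‖ - ‖B‖)| := by gcongr
    _ ≤ |2 * y - bfac y| * ‖A‖ + |bfac y| * |‖A‖ - ‖B‖| := by
      rw [one_mul]
      refine (abs_add_le _ _).trans ?_
      rw [abs_mul, abs_mul, abs_norm]
    _ ≤ 16 * y^2 * (M * (y⁻¹ * y ^ (-1/2:ℝ))) + 4 * y * (M * y ^ (-1/2:ℝ)) := by gcongr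
    _ = 20 * M * (y * y ^ (-1/2:ℝ)) := by field_simp; ring
    _ = _ := by rw [hsq]
end

section
/- Let M > 0 and let b : 𝔻 × 𝔻 → ℂ (where 𝔻 is the open unit disk) be such that: for each t ∈ 𝔻 the map z ↦ b(t, z) is holomorphic on 𝔻; for each z ∈ 𝔻 the map t ↦ b(t, z) is holomorphic on 𝔻; and sup_{t∈𝔻} [ |b(t, 0)| + sup_{z∈𝔻} (1 − |z|²)|∂_z b(t, z)| ] ≤ M. Let g be holomorphic and Lebesgue-integrable on 𝔻 (i.e. g belongs to the Bergman space A¹). Then for each t ∈ 𝔻 the limit F(t) := lim_{r→1⁻} (1/π) ∫_𝔻 b(t, z) · conj(g(rz)) dA(z) exists, and the function F is holomorphic on 𝔻. -/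
open Complex MeasureTheory Filter Topology Set Metric

lemma hasSum_congr_aux {f g : ℕ → ℂ} {a b : ℂ} (h : HasSum f a) (hfg : ∀ n, g n = f n)
    (hab : b = a) : HasSum g b := by
  rw [hab, show g = f from funext hfg]
  exact h

lemma holo_param {α : Type*} [MeasurableSpace α] (μ : Measure α) (u : ℂ → α → ℂ) (B : α → ℝ)
    (hB : Integrable B μ)
    (hm : ∀ t ∈ ball (0:ℂ) 1, AEStronglyMeasurable (u t) μ)
    (hu : ∀ᵐ x ∂μ, DifferentiableOn ℂ (fun t => u t x) (ball (0:ℂ) 1) ∧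
      ∀ t ∈ ball (0:ℂ) 1, ‖u t x‖ ≤ B x) :
    DifferentiableOn ℂ (fun t => ∫ x, u t x ∂μ) (ball (0:ℂ) 1) := by
  intro t0 ht0
  obtain ⟨ε, hε, hsub⟩ := Metric.isOpen_iff.1 (isOpen_ball : IsOpen (ball (0:ℂ) 1)) t0 ht0
  have hδ : 0 < ε / 2 / 2 := by positivity
  have key := hasDerivAt_integral_of_dominated_loc_of_deriv_le (μ := μ) (𝕜 := ℂ)
    (F := u) (x₀ := t0) (s := ball t0 (ε/2)) (F' := fun t x => deriv (fun t => u t x) t)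
    (bound := fun x => B x / (ε/2/2)) (ball_mem_nhds _ (by positivity))
    (by
      filter_upwards [isOpen_ball.mem_nhds ht0] with t ht using hm t ht)
    (hB.mono' (hm t0 ht0) (hu.mono fun x hx => hx.2 t0 ht0))
    (by
      -- measurability
      let δ : ℕ → ℂ := fun n => ((ε / 2 / (n + 1) : ℝ) : ℂ)
      have hδ0 : Tendsto δ atTop (𝓝 0) := by
        have : Tendsto (fun n : ℕ => (ε / 2 / (n + 1) : ℝ)) atTop (𝓝 0) := by
          have := tendsto_one_div_add_atTop_nhds_zero_nat (𝕜 := ℝ)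
          have := this.const_mul (ε/2)
          simpa [div_eq_mul_inv] using this
        have := (Complex.continuous_ofReal.tendsto 0).comp this
        simpa [δ, Function.comp_def] using this
      have hδne : ∀ n, δ n ≠ 0 := by
        intro n
        simp only [δ, ne_eq, ofReal_eq_zero]
        positivity
      have hδt : ∀ n, t0 + δ n ∈ ball (0:ℂ) 1 := by
        intro n
        apply hsub
        simp only [mem_ball, dist_self_add_left, δ, Complex.norm_real, Real.norm_eq_abs]
        rw [abs_of_pos (by positivity)]
        calc ε / 2 / (n+1) ≤ ε / 2 / 1 := by gcongr; simp
          _ < ε := by linarith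
      refine aestronglyMeasurable_of_tendsto_ae (u := atTop)
        (f := fun (n:ℕ) x => (δ n)⁻¹ • (u (t0 + δ n) x - u t0 x)) ?_ ?_
      · intro n
        exact ((hm _ (hδt n)).sub (hm _ ht0)).const_smul ((δ n)⁻¹ : ℂ)
      · filter_upwards [hu] with x hx
        have hd : HasDerivAt (fun t => u t x) (deriv (fun t => u t x) t0) t0 :=
          (hx.1.differentiableAt (isOpen_ball.mem_nhds ht0)).hasDerivAt
        have := hd.tendsto_slope_zero
        refine this.comp ?_
        rw [tendsto_nhdsWithin_iff]
        exact ⟨hδ0, Eventually.of_forall hδne⟩)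
    (by
      filter_upwards [hu] with x hx t ht
      have hs : closedBall t (ε/2/2) ⊆ ball (0:ℂ) 1 := by
        refine Subset.trans (fun y hy => ?_) hsub
        rw [mem_closedBall] at hy
        rw [mem_ball] at ht ⊢
        linarith [dist_triangle y t t0]
      refine Complex.norm_deriv_le_of_forall_mem_sphere_norm_le hδ ?_ ?_
      · exact (hx.1.mono hs).diffContOnCl_ball subset_rfl
      · intro z hz
        exact hx.2 z (hs (sphere_subset_closedBall hz)))
    (hB.div_const _)
    (by
      filter_upwards [hu] with x hx t ht
      refine (hx.1.differentiableAt (isOpen_ball.mem_nhds (hsub ?_))).hasDerivAt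
      exact ball_subset_ball (by linarith) ht)
  exact key.2.differentiableAt.differentiableWithinAt

lemma circle_coeff (f : ℂ → ℂ) (hf : DifferentiableOn ℂ f (ball (0:ℂ) 1)) (n : ℕ) (ρ : ℝ)
    (h0 : 0 < ρ) (h1 : ρ < 1) :
    ∫ θ in (-Real.pi)..Real.pi, f (ρ * exp (θ * I)) * (starRingEnd ℂ) (ρ * exp (θ * I)) ^ n
      = 2 * Real.pi * (iteratedDeriv n f 0 / n.factorial) * (ρ:ℂ) ^ (2 * n) := by
  have h := (hf.mono (closedBall_subset_ball (x := (0:ℂ)) h1)).circleIntegral_one_div_sub_center_pow_smul h0 n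
  rw [circleIntegral] at h
  set G : ℝ → ℂ := fun θ => f (ρ * exp (θ * I)) * (starRingEnd ℂ) (ρ * exp (θ * I)) ^ n with hG
  have hper : Function.Periodic G (2 * Real.pi) := by
    intro θ
    have : exp (((θ + 2 * Real.pi : ℝ) : ℂ) * I) = exp (θ * I) := by
      push_cast
      rw [add_mul, Complex.exp_periodic]
    simp only [hG, this]
  have e1 : ∫ θ in (-Real.pi)..Real.pi, G θ = ∫ θ in (0)..(2 * Real.pi), G θ := by
    have := hper.intervalIntegral_add_eq (-Real.pi) 0
    rw [show -Real.pi + 2 * Real.pi = Real.pi by ring, zero_add] at this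
    exact this
  rw [e1]
  have hρ : (ρ:ℂ) ≠ 0 := by exact_mod_cast h0.ne'
  have e2 : ∀ θ : ℝ, deriv (circleMap 0 ρ) θ • (1 / (circleMap 0 ρ θ - 0) ^ (n + 1)) • f (circleMap 0 ρ θ)
      = (I / (ρ:ℂ) ^ (2 * n)) * G θ := by
    intro θ
    have hc : circleMap 0 ρ θ = ρ * exp (θ * I) := by simp [circleMap]
    have he : exp (θ * I) ≠ 0 := Complex.exp_ne_zero _
    have hconj : (starRingEnd ℂ) (ρ * exp (θ * I)) = ρ * (exp (θ * I))⁻¹ := by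
      rw [map_mul, Complex.conj_ofReal, ← Complex.exp_conj, ← Complex.exp_neg]
      simp
    rw [deriv_circleMap, sub_zero, hc]
    simp only [hG, hconj, smul_eq_mul]
    generalize f (ρ * exp (θ * I)) = v
    generalize exp (θ * I) = E at *
    simp only [mul_pow, inv_pow]
    field_simp
    ring
  simp_rw [e2] at h
  rw [intervalIntegral.integral_const_mul] at h
  have hI : I ≠ 0 := I_ne_zero
  have : ∫ θ in (0)..(2 * Real.pi), G θ = ((ρ:ℂ) ^ (2 * n) / I) * (I / (ρ:ℂ) ^ (2 * n) * ∫ θ in (0)..(2 * Real.pi), G θ) := by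
    field_simp
  rw [this, h, smul_eq_mul]
  field_simp

lemma moment (f : ℂ → ℂ) (hf : DifferentiableOn ℂ f (ball (0:ℂ) 1)) (w : ℝ → ℝ)
    (hw : Continuous w) (n : ℕ)
    (hInt : IntegrableOn (fun z : ℂ => (w ‖z‖ : ℂ) * (f z * (starRingEnd ℂ) z ^ n)) (ball (0:ℂ) 1)) :
    ∫ z in ball (0:ℂ) 1, (w ‖z‖ : ℂ) * (f z * (starRingEnd ℂ) z ^ n)
      = 2 * Real.pi * (iteratedDeriv n f 0 / n.factorial) *
        ((∫ ρ in (0:ℝ)..1, w ρ * ρ ^ (2 * n + 1) : ℝ) : ℂ) := by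
  set Φ : ℂ → ℂ := fun z => (w ‖z‖ : ℂ) * (f z * (starRingEnd ℂ) z ^ n) with hΦ
  have hΦc : ContinuousOn Φ (ball (0:ℂ) 1) := by
    have := hf.continuousOn
    have h2 : Continuous (fun z : ℂ => (w ‖z‖ : ℂ)) := by fun_prop
    have h3 : Continuous (fun z : ℂ => (starRingEnd ℂ) z ^ n) :=
      (Complex.continuous_conj).pow n
    exact h2.continuousOn.mul (this.mul h3.continuousOn)
  let Ψ : ℂ → ℂ := (ball (0:ℂ) 1).indicator Φ
  have hΨm : Measurable Ψ := by
    classical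
    have := hΦc.measurable_piecewise (g := fun _ => (0:ℂ)) continuousOn_const measurableSet_ball
    convert this using 1
    ext z
    simp [Ψ, indicator, piecewise]
  have hΨint : Integrable Ψ := hInt.integrable_indicator measurableSet_ball
  have hpm : Measurable (fun p : ℝ × ℝ => Complex.polarCoord.symm p) := by
    have : (fun p : ℝ × ℝ => Complex.polarCoord.symm p) =
      fun p : ℝ × ℝ => (p.1 : ℂ) * (Real.cos p.2 + Real.sin p.2 * Complex.I) := by
      ext p; exact Complex.polarCoord_symm_apply p
    rw [this]
    have hc : Continuous (fun p : ℝ × ℝ => (p.1 : ℂ) * (Real.cos p.2 + Real.sin p.2 * Complex.I)) := by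
      fun_prop
    exact hc.measurable
  have hpint : IntegrableOn (fun p : ℝ × ℝ => p.1 • Ψ (Complex.polarCoord.symm p))
      polarCoord.target := by
    refine ⟨(measurable_fst.smul (hΨm.comp hpm)).aestronglyMeasurable, ?_⟩
    have h := Complex.lintegral_comp_polarCoord_symm (fun z => ‖Ψ z‖ₑ)
    have h2 : ∫⁻ z, ‖Ψ z‖ₑ < ⊤ := hΨint.2
    rw [← h] at h2
    refine lt_of_le_of_lt (le_of_eq ?_) h2
    refine setLIntegral_congr_fun polarCoord.open_target.measurableSet (fun p hp => ?_)
    have hp1 : 0 < p.1 := hp.1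
    simp only [enorm_smul, smul_eq_mul]
    rw [Real.enorm_of_nonneg hp1.le]
  rw [← integral_indicator measurableSet_ball]
  change ∫ z, Ψ z = _
  rw [← Complex.integral_comp_polarCoord_symm]
  have ht : polarCoord.target = Ioi (0:ℝ) ×ˢ Ioo (-Real.pi) Real.pi := rfl
  rw [ht] at hpint ⊢
  rw [Measure.volume_eq_prod] at hpint ⊢
  rw [setIntegral_prod _ hpint]
  have hinner : ∀ ρ ∈ Ioi (0:ℝ), ∫ θ in Ioo (-Real.pi) Real.pi, ρ • Ψ (Complex.polarCoord.symm (ρ, θ))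
      = (Ioo (0:ℝ) 1).indicator (fun ρ => 2 * Real.pi * (iteratedDeriv n f 0 / n.factorial) *
        ((w ρ * ρ ^ (2 * n + 1) : ℝ) : ℂ)) ρ := by
    intro ρ hρ
    have hρ : 0 < ρ := hρ
    have hn : ∀ θ : ℝ, ‖Complex.polarCoord.symm (ρ, θ)‖ = ρ := by
      intro θ; rw [Complex.norm_polarCoord_symm, abs_of_pos hρ]
    have hs : ∀ θ : ℝ, Complex.polarCoord.symm (ρ, θ) = ρ * exp (θ * I) := by
      intro θ; rw [Complex.polarCoord_symm_apply, Complex.exp_mul_I]; simp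
    by_cases h1 : ρ < 1
    · have hρ1 : ρ ∈ Ioo (0:ℝ) 1 := ⟨hρ, h1⟩
      rw [indicator_of_mem hρ1]
      have : ∀ θ : ℝ, ρ • Ψ (Complex.polarCoord.symm (ρ, θ)) = (ρ * w ρ : ℂ) *
          (f (ρ * exp (θ * I)) * (starRingEnd ℂ) (ρ * exp (θ * I)) ^ n) := by
        intro θ
        have hm : Complex.polarCoord.symm (ρ, θ) ∈ ball (0:ℂ) 1 := by
          rw [mem_ball_zero_iff, hn]; exact h1
        simp only [Ψ]
        rw [indicator_of_mem hm]
        simp only [hΦ]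
        rw [hn, hs, real_smul]
        ring
      simp_rw [this]
      rw [integral_const_mul, ← integral_Ioc_eq_integral_Ioo,
        ← intervalIntegral.integral_of_le (by linarith [Real.pi_pos]),
        circle_coeff f hf n ρ hρ h1]
      push_cast
      ring
    · have : ∀ θ : ℝ, ρ • Ψ (Complex.polarCoord.symm (ρ, θ)) = 0 := by
        intro θ
        have hm : Complex.polarCoord.symm (ρ, θ) ∉ ball (0:ℂ) 1 := by
          rw [mem_ball_zero_iff, hn]; exact h1
        simp only [Ψ]
        rw [indicator_of_notMem hm, smul_zero]
      rw [indicator_of_notMem (fun h => h1 h.2)]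
      simp_rw [this]
      simp
  rw [setIntegral_congr_fun measurableSet_Ioi hinner, setIntegral_indicator measurableSet_Ioo,
    inter_eq_self_of_subset_right Ioo_subset_Ioi_self, integral_const_mul,
    intervalIntegral.integral_of_le zero_le_one, integral_Ioc_eq_integral_Ioo, integral_complex_ofReal]

lemma bloch_growth (M : ℝ) (f : ℂ → ℂ) (hf : DifferentiableOn ℂ f (ball (0:ℂ) 1))
    (hbd : ∀ z ∈ ball (0:ℂ) 1, ‖f 0‖ + (1 - ‖z‖^2) * ‖deriv f z‖ ≤ M) :
    ∀ z ∈ ball (0:ℂ) 1, ‖f z‖ ≤ M - M * Real.log (1 - ‖z‖) := by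
  intro z hz
  rw [mem_ball_zero_iff] at hz
  by_cases hz0 : z = 0
  · subst hz0
    have := hbd 0 (by simp)
    simp only [norm_zero, sub_zero, Real.log_one, mul_zero]
    simp at this
    linarith [norm_nonneg (deriv f 0)]
  have hzp : 0 < ‖z‖ := norm_pos_iff.2 hz0
  have hM : 0 ≤ M := by
    have := hbd 0 (by simp)
    simp at this
    linarith [norm_nonneg (deriv f 0), norm_nonneg (f 0)]
  set e : ℂ := z / ‖z‖ with he
  have hen : ‖e‖ = 1 := by
    rw [he, norm_div]; simp [hzp.ne']
  have hmem : ∀ s ∈ Icc (0:ℝ) ‖z‖, (s:ℂ) * e ∈ ball (0:ℂ) 1 ∧ ‖(s:ℂ) * e‖ = s := by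
    intro s hs
    have : ‖(s:ℂ) * e‖ = s := by
      rw [norm_mul, hen, Complex.norm_real, Real.norm_of_nonneg hs.1, mul_one]
    refine ⟨?_, this⟩
    rw [mem_ball_zero_iff, this]; linarith [hs.2]
  have hder : ∀ s ∈ Icc (0:ℝ) ‖z‖, HasDerivAt (fun s : ℝ => f (s * e)) (deriv f (s * e) * e) s := by
    intro s hs
    have h1 : HasDerivAt f (deriv f (s * e)) (s * e) :=
      (hf.differentiableAt (isOpen_ball.mem_nhds (hmem s hs).1)).hasDerivAt
    have h2 : HasDerivAt (fun s : ℝ => (s:ℂ) * e) e s := by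
      simpa using (Complex.ofRealCLM.hasDerivAt (x := s)).mul_const e
    exact h1.comp s h2
  have hB : ∀ s ∈ Icc (0:ℝ) ‖z‖, HasDerivAt (fun s : ℝ => M - M * Real.log (1 - s)) (M / (1 - s)) s := by
    intro s hs
    have hne : 1 - s ≠ 0 := by linarith [hs.2]
    have h1 : HasDerivAt (fun s : ℝ => 1 - s) (-1) s := by
      simpa using (hasDerivAt_id s).const_sub 1
    have := ((h1.log hne).const_mul M).const_sub M
    exact this.congr_deriv (by ring)
  have key := image_norm_le_of_norm_deriv_right_le_deriv_boundary' (a := 0) (b := ‖z‖)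
    (f := fun s : ℝ => f (s * e)) (f' := fun s => deriv f (s * e) * e)
    (B := fun s : ℝ => M - M * Real.log (1 - s)) (B' := fun s => M / (1 - s))
    (fun s hs => (hder s hs).continuousAt.continuousWithinAt)
    (fun s hs => (hder s (Ico_subset_Icc_self hs)).hasDerivWithinAt)
    (by
      have := hbd 0 (by simp)
      simp at this ⊢
      linarith [norm_nonneg (deriv f 0)])
    (fun s hs => (hB s hs).continuousAt.continuousWithinAt)
    (fun s hs => (hB s (Ico_subset_Icc_self hs)).hasDerivWithinAt)
    (by
      intro s hs
      have hs' := Ico_subset_Icc_self hs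
      have := hbd _ (hmem s hs').1
      rw [(hmem s hs').2] at this
      have h1s : 0 < 1 - s := by linarith [hs.2]
      rw [norm_mul, hen, mul_one, le_div_iff₀ h1s]
      have h3 : 0 ≤ s * (1 - s) * ‖deriv f (s * e)‖ := by
        have := hs.1
        positivity
      nlinarith [norm_nonneg (f 0)])
    (right_mem_Icc.2 hzp.le)
  have hze : (‖z‖:ℂ) * e = z := by
    have : (‖z‖:ℂ) ≠ 0 := by exact_mod_cast hzp.ne'
    rw [he]; field_simp
  simpa [hze] using key

lemma growth_integrable (M : ℝ) :
    IntegrableOn (fun z : ℂ => M - M * Real.log (1 - ‖z‖)) (ball (0:ℂ) 1) := by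
  rw [integrableOn_fun_norm_addHaar volume (f := fun s => M - M * Real.log (1 - s))]
  have h : IntervalIntegrable (fun s : ℝ => M - M * Real.log (1 - s)) volume 0 1 := by
    have h1 : IntervalIntegrable Real.log volume 0 1 := intervalIntegral.intervalIntegrable_log'
    have h2 := h1.comp_sub_left 1
    simp only [sub_zero, sub_self] at h2
    exact intervalIntegrable_const.sub (h2.symm.const_mul M)
  have h3 := h.continuousOn_mul (continuousOn_id (s := uIcc (0:ℝ) 1))
  rw [intervalIntegrable_iff_integrableOn_Ioo_of_le zero_le_one] at h3
  simpa using h3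

lemma bloch_integrable (M : ℝ) (f : ℂ → ℂ) (hf : DifferentiableOn ℂ f (ball (0:ℂ) 1))
    (hbd : ∀ z ∈ ball (0:ℂ) 1, ‖f 0‖ + (1 - ‖z‖^2) * ‖deriv f z‖ ≤ M) :
    IntegrableOn f (ball (0:ℂ) 1) := by
  refine (growth_integrable M).mono' (hf.continuousOn.aestronglyMeasurable measurableSet_ball) ?_
  exact (ae_restrict_iff' measurableSet_ball).2 (Eventually.of_forall (bloch_growth M f hf hbd))

lemma weighted_cont (f : ℂ → ℂ) (hf : DifferentiableOn ℂ f (ball (0:ℂ) 1)) :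
    ContinuousOn (fun z : ℂ => ((1 - ‖z‖^2 : ℝ) : ℂ) * deriv f z) (ball (0:ℂ) 1) := by
  have h1 : ContinuousOn (deriv f) (ball (0:ℂ) 1) := (hf.deriv isOpen_ball).continuousOn
  have h2 : Continuous (fun z : ℂ => ((1 - ‖z‖^2 : ℝ) : ℂ)) := by fun_prop
  exact h2.continuousOn.mul h1

lemma weighted_bound (M : ℝ) (f : ℂ → ℂ)
    (hbd : ∀ z ∈ ball (0:ℂ) 1, ‖f 0‖ + (1 - ‖z‖^2) * ‖deriv f z‖ ≤ M) :
    ∀ z ∈ ball (0:ℂ) 1, ‖((1 - ‖z‖^2 : ℝ) : ℂ) * deriv f z‖ ≤ M := by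
  intro z hz
  have h := hbd z hz
  rw [mem_ball_zero_iff] at hz
  have h1 : 0 ≤ 1 - ‖z‖^2 := by nlinarith [norm_nonneg z]
  rw [norm_mul, Complex.norm_real, Real.norm_of_nonneg h1]
  linarith [norm_nonneg (f 0)]

lemma weighted_integrable (M : ℝ) (f : ℂ → ℂ) (hf : DifferentiableOn ℂ f (ball (0:ℂ) 1))
    (hbd : ∀ z ∈ ball (0:ℂ) 1, ‖f 0‖ + (1 - ‖z‖^2) * ‖deriv f z‖ ≤ M) :
    IntegrableOn (fun z : ℂ => ((1 - ‖z‖^2 : ℝ) : ℂ) * deriv f z) (ball (0:ℂ) 1) := by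
  refine Integrable.mono' (g := fun _ => M) (integrableOn_const (by simp))
    ((weighted_cont f hf).aestronglyMeasurable measurableSet_ball) ?_
  exact (ae_restrict_iff' measurableSet_ball).2 (Eventually.of_forall (weighted_bound M f hbd))

lemma mul_conj_pow_integrable (q : ℂ → ℂ) (hq : IntegrableOn q (ball (0:ℂ) 1)) (n : ℕ) :
    IntegrableOn (fun z => q z * (starRingEnd ℂ) z ^ n) (ball (0:ℂ) 1) ∧
    ∫ z in ball (0:ℂ) 1, ‖q z * (starRingEnd ℂ) z ^ n‖ ≤ ∫ z in ball (0:ℂ) 1, ‖q z‖ := by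
  have hb : ∀ z ∈ ball (0:ℂ) 1, ‖q z * (starRingEnd ℂ) z ^ n‖ ≤ ‖q z‖ := by
    intro z hz
    rw [mem_ball_zero_iff] at hz
    rw [norm_mul, norm_pow, RCLike.norm_conj]
    exact mul_le_of_le_one_right (norm_nonneg _) (pow_le_one₀ (norm_nonneg _) hz.le)
  have hi : IntegrableOn (fun z => q z * (starRingEnd ℂ) z ^ n) (ball (0:ℂ) 1) := by
    refine hq.norm.mono' (hq.aestronglyMeasurable.mul
      ((Complex.continuous_conj).pow n).aestronglyMeasurable) ?_
    exact (ae_restrict_iff' measurableSet_ball).2 (Eventually.of_forall hb)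
  exact ⟨hi, setIntegral_mono_on hi.norm hq.norm measurableSet_ball hb⟩

lemma moment_zero (f : ℂ → ℂ) (hf : DifferentiableOn ℂ f (ball (0:ℂ) 1))
    (hi : IntegrableOn f (ball (0:ℂ) 1)) :
    ∫ z in ball (0:ℂ) 1, f z * (starRingEnd ℂ) z ^ 0 = Real.pi * f 0 := by
  have h := moment f hf (fun _ => 1) continuous_const 0 (by simpa using hi)
  simp only [ofReal_one, one_mul] at h
  rw [h]
  have : ∫ ρ in (0:ℝ)..1, ρ ^ (2 * 0 + 1) = 1 / 2 := by
    rw [integral_pow]; norm_num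
  rw [this]
  simp
  ring

lemma moment_succ (M : ℝ) (f : ℂ → ℂ) (hf : DifferentiableOn ℂ f (ball (0:ℂ) 1))
    (hbd : ∀ z ∈ ball (0:ℂ) 1, ‖f 0‖ + (1 - ‖z‖^2) * ‖deriv f z‖ ≤ M) (n : ℕ) :
    ∫ z in ball (0:ℂ) 1, f z * (starRingEnd ℂ) z ^ (n + 1) =
    ∫ z in ball (0:ℂ) 1, (((1 - ‖z‖^2 : ℝ) : ℂ) * deriv f z) * (starRingEnd ℂ) z ^ n := by
  have hi := (mul_conj_pow_integrable f (bloch_integrable M f hf hbd) (n+1)).1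
  have hi2 := (mul_conj_pow_integrable _ (weighted_integrable M f hf hbd) n).1
  have h := moment f hf (fun _ => 1) continuous_const (n+1) (by simpa using hi)
  have h' := moment (deriv f) (hf.deriv isOpen_ball) (fun s => 1 - s^2) (by fun_prop) n
    (by simpa only [mul_assoc] using hi2)
  simp only [ofReal_one, one_mul] at h
  simp only [mul_assoc] at h' ⊢
  rw [h, h', ← iteratedDeriv_succ']
  have e1 : ∫ ρ in (0:ℝ)..1, ρ ^ (2 * (n+1) + 1) = 1 / (2 * n + 4) := by
    rw [integral_pow]
    push_cast
    norm_num
    ring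
  have e2 : ∫ ρ in (0:ℝ)..1, (1 - ρ^2) * ρ ^ (2 * n + 1) = 1 / (2 * (n:ℝ) + 2) - 1 / (2 * (n:ℝ) + 4) := by
    have : ∀ ρ : ℝ, (1 - ρ^2) * ρ ^ (2 * n + 1) = ρ ^ (2 * n + 1) - ρ ^ (2 * (n+1) + 1) := by
      intro ρ; ring
    simp_rw [this]
    rw [intervalIntegral.integral_sub (by simp) (by simp), e1,
      integral_pow]
    push_cast
    norm_num
    ring
  rw [e1, e2, Nat.factorial_succ]
  have a1 : (2 * (n:ℂ) + 2) ≠ 0 := by exact_mod_cast (by positivity : (2 * (n:ℝ) + 2) ≠ 0)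
  have a2 : (2 * (n:ℂ) + 4) ≠ 0 := by exact_mod_cast (by positivity : (2 * (n:ℝ) + 4) ≠ 0)
  have a3 : ((n:ℂ) + 1) ≠ 0 := by exact_mod_cast (by positivity : ((n:ℝ) + 1) ≠ 0)
  have a4 : (n.factorial : ℂ) ≠ 0 := by exact_mod_cast n.factorial_ne_zero
  have e3 : (1 / (2 * (n:ℂ) + 2) - 1 / (2 * n + 4)) = (1 / (2 * n + 4)) * (1 / (n + 1)) := by
    field_simp
    ring
  push_cast
  rw [e3]
  field_simp

/-- expansion of a pairing. -/
lemma pairing_hasSum (q : ℂ → ℂ) (hq : IntegrableOn q (ball (0:ℂ) 1)) (a : ℕ → ℂ)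
    (ha : Summable (fun n => ‖a n‖)) (h : ℂ → ℂ)
    (hh : ∀ z ∈ ball (0:ℂ) 1, HasSum (fun n => a n * z ^ n) (h z)) :
    HasSum (fun n => (starRingEnd ℂ) (a n) * ∫ z in ball (0:ℂ) 1, q z * (starRingEnd ℂ) z ^ n)
      (∫ z in ball (0:ℂ) 1, q z * (starRingEnd ℂ) (h z)) := by
  have key := hasSum_integral_of_summable_integral_norm (μ := volume.restrict (ball (0:ℂ) 1))
    (F := fun n z => (starRingEnd ℂ) (a n) * (q z * (starRingEnd ℂ) z ^ n))
    (fun n => ((mul_conj_pow_integrable q hq n).1).const_mul _)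
    (by
      refine Summable.of_nonneg_of_le (fun n => integral_nonneg fun z => norm_nonneg _) (fun n => ?_)
        (ha.mul_right (∫ z in ball (0:ℂ) 1, ‖q z‖))
      simp_rw [norm_mul ((starRingEnd ℂ) (a n)), RCLike.norm_conj]
      rw [integral_const_mul]
      exact mul_le_mul_of_nonneg_left (mul_conj_pow_integrable q hq n).2 (norm_nonneg _))
  simp_rw [integral_const_mul] at key
  suffices e : ∫ z in ball (0:ℂ) 1, q z * (starRingEnd ℂ) (h z) = ∫ z in ball (0:ℂ) 1,
      ∑' n, (starRingEnd ℂ) (a n) * (q z * (starRingEnd ℂ) z ^ n) by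
    rw [e]; exact key
  refine setIntegral_congr_fun measurableSet_ball (fun z hz => ?_)
  have h1 := ((hh z hz).mapL (Complex.conjCLE : ℂ →L[ℝ] ℂ)).mul_left (q z)
  refine (HasSum.tsum_eq ?_).symm
  refine hasSum_congr_aux h1 (fun n => ?_) ?_
  · simp
    ring
  · simp

lemma pairing_identity (M : ℝ) (f : ℂ → ℂ) (hf : DifferentiableOn ℂ f (ball (0:ℂ) 1))
    (hbd : ∀ z ∈ ball (0:ℂ) 1, ‖f 0‖ + (1 - ‖z‖^2) * ‖deriv f z‖ ≤ M) (a : ℕ → ℂ)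
    (ha : Summable (fun n => ‖a n‖)) (h k : ℂ → ℂ)
    (hh : ∀ z ∈ ball (0:ℂ) 1, HasSum (fun n => a n * z ^ n) (h z))
    (hk : ∀ z ∈ ball (0:ℂ) 1, HasSum (fun n => a (n+1) * z ^ n) (k z)) :
    ∫ z in ball (0:ℂ) 1, f z * (starRingEnd ℂ) (h z) =
      Real.pi * f 0 * (starRingEnd ℂ) (a 0) +
      ∫ z in ball (0:ℂ) 1, (((1 - ‖z‖^2 : ℝ) : ℂ) * deriv f z) * (starRingEnd ℂ) (k z) := by
  have hfi := bloch_integrable M f hf hbd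
  have h1 := pairing_hasSum f hfi a ha h hh
  have h2 := pairing_hasSum _ (weighted_integrable M f hf hbd) (fun n => a (n+1))
    ((summable_nat_add_iff 1).2 ha) k hk
  simp_rw [← moment_succ M f hf hbd] at h2
  have h3 := (hasSum_nat_add_iff (f := fun n => (starRingEnd ℂ) (a n) * ∫ z in ball (0:ℂ) 1, f z * (starRingEnd ℂ) z ^ n) 1).1 h2
  have := h1.unique h3
  rw [this]
  simp only [Finset.range_one, Finset.sum_singleton, moment_zero f hf hfi]
  ring

lemma dilation_limit (M : ℝ) (P k : ℂ → ℂ) (hP : ContinuousOn P (ball (0:ℂ) 1))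
    (hPM : ∀ z ∈ ball (0:ℂ) 1, ‖P z‖ ≤ M) (hk : ContinuousOn k (ball (0:ℂ) 1))
    (hki : IntegrableOn k (ball (0:ℂ) 1)) :
    Tendsto (fun r : ℝ => ∫ z in ball (0:ℂ) 1, P z * (starRingEnd ℂ) (r * k (r * z)))
      (𝓝[<] (1:ℝ)) (𝓝 (∫ z in ball (0:ℂ) 1, P z * (starRingEnd ℂ) (k z))) := by
  have hM0 : 0 ≤ M := (norm_nonneg _).trans (hPM 0 (by simp))
  have hev : ∀ᶠ r : ℝ in 𝓝[<] (1:ℝ), 0 < r ∧ r < 1 := by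
    filter_upwards [self_mem_nhdsWithin,
      mem_nhdsWithin_of_mem_nhds (isOpen_Ioi.mem_nhds (zero_lt_one (α := ℝ)))] with r h1 h2
      using ⟨h2, h1⟩
  have heq : ∀ᶠ r : ℝ in 𝓝[<] (1:ℝ), ((r^2)⁻¹ * r) • ∫ w in ball (0:ℂ) 1,
      (ball (0:ℂ) r).indicator (fun w => P (r⁻¹ • w) * (starRingEnd ℂ) (k w)) w =
      ∫ z in ball (0:ℂ) 1, P z * (starRingEnd ℂ) (r * k (r * z)) := by
    filter_upwards [hev] with r hr
    rw [setIntegral_indicator measurableSet_ball,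
      inter_eq_self_of_subset_right (ball_subset_ball hr.2.le)]
    have := Measure.setIntegral_comp_smul_of_pos (volume : Measure ℂ)
      (fun w => P (r⁻¹ • w) * (starRingEnd ℂ) (k w)) (ball (0:ℂ) 1) hr.1
    rw [smul_unitBall_of_pos hr.1, Complex.finrank_real_complex] at this
    rw [mul_comm, mul_smul, ← this, ← integral_smul]
    congr 1
    ext z
    rw [inv_smul_smul₀ hr.1.ne', map_mul, Complex.conj_ofReal]
    simp only [real_smul]
    ring
  refine Tendsto.congr' heq ?_
  have hlim : Tendsto (fun r : ℝ => ∫ w in ball (0:ℂ) 1,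
      (ball (0:ℂ) r).indicator (fun w => P (r⁻¹ • w) * (starRingEnd ℂ) (k w)) w) (𝓝[<] (1:ℝ))
      (𝓝 (∫ z in ball (0:ℂ) 1, P z * (starRingEnd ℂ) (k z))) := by
    refine tendsto_integral_filter_of_dominated_convergence (fun w => M * ‖k w‖) ?_ ?_ ?_ ?_
    · filter_upwards [hev] with r hr
      rw [aestronglyMeasurable_indicator_iff measurableSet_ball,
        Measure.restrict_restrict measurableSet_ball]
      have hsub : ball (0:ℂ) r ⊆ ball 0 1 := ball_subset_ball hr.2.le
      rw [inter_eq_self_of_subset_left hsub]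
      refine ContinuousOn.aestronglyMeasurable ?_ measurableSet_ball
      refine ContinuousOn.mul ?_ (Complex.continuous_conj.comp_continuousOn (hk.mono hsub))
      refine hP.comp (continuous_const_smul _).continuousOn ?_
      intro w hw
      rw [mem_ball_zero_iff] at hw ⊢
      rw [norm_smul, norm_inv, Real.norm_of_nonneg hr.1.le, inv_mul_lt_iff₀ hr.1]
      linarith
    · filter_upwards [hev] with r hr
      refine Eventually.of_forall fun w => ?_
      by_cases hw : w ∈ ball (0:ℂ) r
      · rw [indicator_of_mem hw, norm_mul, RCLike.norm_conj]
        refine mul_le_mul_of_nonneg_right (hPM _ ?_) (norm_nonneg _)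
        rw [mem_ball_zero_iff] at hw ⊢
        rw [norm_smul, norm_inv, Real.norm_of_nonneg hr.1.le, inv_mul_lt_iff₀ hr.1]
        linarith
      · rw [indicator_of_notMem hw, norm_zero]
        positivity
    · exact hki.norm.const_mul M
    · refine (ae_restrict_iff' measurableSet_ball).2 (Eventually.of_forall fun w hw => ?_)
      have hw' : ‖w‖ < 1 := by simpa using hw
      have h1 : Tendsto (fun r : ℝ => P (r⁻¹ • w) * (starRingEnd ℂ) (k w)) (𝓝[<] (1:ℝ))
          (𝓝 (P w * (starRingEnd ℂ) (k w))) := by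
        refine Tendsto.mul_const _ ?_
        have hc : ContinuousAt P w := hP.continuousAt (isOpen_ball.mem_nhds hw)
        have h2 : Tendsto (fun r : ℝ => r⁻¹ • w) (𝓝[<] (1:ℝ)) (𝓝 w) := by
          have : ContinuousAt (fun r : ℝ => r⁻¹ • w) 1 :=
            (continuousAt_inv₀ one_ne_zero).smul continuousAt_const
          have := this.tendsto
          simp only [inv_one, one_smul] at this
          exact this.mono_left nhdsWithin_le_nhds
        exact hc.tendsto.comp h2
      refine h1.congr' ?_
      filter_upwards [mem_nhdsWithin_of_mem_nhds (isOpen_Ioi.mem_nhds hw')] with r hr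
      rw [indicator_of_mem]
      simpa using hr
  have hc : Tendsto (fun r : ℝ => (r^2)⁻¹ * r) (𝓝[<] (1:ℝ)) (𝓝 1) := by
    have : ContinuousAt (fun r : ℝ => (r^2)⁻¹ * r) 1 :=
      ((continuousAt_id.pow 2).inv₀ (by simp)).mul continuousAt_id
    have := this.tendsto
    simp only [one_pow, inv_one, one_mul] at this
    exact this.mono_left nhdsWithin_le_nhds
  simpa using hc.smul hlim

lemma dslope_integrable (g : ℂ → ℂ) (hg : DifferentiableOn ℂ g (ball (0:ℂ) 1))
    (hgint : IntegrableOn g (ball (0:ℂ) 1)) :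
    ContinuousOn (dslope g 0) (ball (0:ℂ) 1) ∧ IntegrableOn (dslope g 0) (ball (0:ℂ) 1) := by
  have hd : ContinuousOn (dslope g 0) (ball (0:ℂ) 1) :=
    ((differentiableOn_dslope (isOpen_ball.mem_nhds (by simp))).2 hg).continuousOn
  refine ⟨hd, ?_⟩
  have hsub : closedBall (0:ℂ) (1/2) ⊆ ball 0 1 := closedBall_subset_ball (by norm_num)
  have h1 : IntegrableOn (dslope g 0) (closedBall (0:ℂ) (1/2)) :=
    (hd.mono hsub).integrableOn_compact (isCompact_closedBall _ _)
  have hms : MeasurableSet (ball (0:ℂ) 1 \ closedBall 0 (1/2)) :=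
    measurableSet_ball.diff measurableSet_closedBall
  have h2 : IntegrableOn (dslope g 0) (ball (0:ℂ) 1 \ closedBall 0 (1/2)) := by
    have hb : IntegrableOn (fun z => 2 * (‖g z‖ + ‖g 0‖)) (ball (0:ℂ) 1 \ closedBall 0 (1/2)) := by
      refine IntegrableOn.mono_set (t := ball (0:ℂ) 1) ?_ sdiff_subset
      exact (hgint.norm.add (integrableOn_const (by simp))).const_mul 2
    refine hb.mono' ((hd.mono sdiff_subset).aestronglyMeasurable hms) ?_
    refine (ae_restrict_iff' hms).2 (Eventually.of_forall fun z hz => ?_)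
    have hz2 : 1/2 < ‖z‖ := by
      have := hz.2
      rw [mem_closedBall_zero_iff] at this
      exact not_le.1 this
    have hz0 : z ≠ 0 := by
      intro h; subst h; simp at hz2; linarith
    rw [dslope_of_ne _ hz0, slope_def_module, norm_smul, sub_zero, norm_inv]
    have h3 : ‖z‖⁻¹ ≤ 2 := by
      rw [inv_le_comm₀ (by linarith) (by norm_num)]; linarith
    exact mul_le_mul h3 (norm_sub_le _ _) (norm_nonneg _) (by norm_num)
  have := h1.union h2
  rwa [union_sdiff_cancel hsub] at this

lemma deriv_holo (M : ℝ) (hM : 0 < M) (b : ℂ → ℂ → ℂ)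
    (hb1 : ∀ t ∈ ball (0:ℂ) 1, DifferentiableOn ℂ (b t) (ball (0:ℂ) 1))
    (hb2 : ∀ z ∈ ball (0:ℂ) 1, DifferentiableOn ℂ (fun t => b t z) (ball (0:ℂ) 1))
    (hbd : ∀ t ∈ ball (0:ℂ) 1, ∀ z ∈ ball (0:ℂ) 1,
      ‖b t 0‖ + (1 - ‖z‖^2) * ‖deriv (b t) z‖ ≤ M) (z : ℂ) (hz : z ∈ ball (0:ℂ) 1) :
    DifferentiableOn ℂ (fun t => deriv (b t) z) (ball (0:ℂ) 1) := by
  have hz' : ‖z‖ < 1 := by simpa using hz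
  obtain ⟨R, hR⟩ : ∃ R : ℝ, R = (1 - ‖z‖) / 2 := ⟨_, rfl⟩
  have hR0 : 0 < R := by rw [hR]; linarith
  have hnorm : ∀ y ∈ closedBall z R, ‖y‖ ≤ 1 - R := by
    intro y hy
    rw [mem_closedBall, dist_eq_norm] at hy
    have : ‖y‖ ≤ ‖y - z‖ + ‖z‖ := by simpa using norm_add_le (y - z) z
    linarith
  have hsub : closedBall z R ⊆ ball 0 1 := by
    intro y hy
    rw [mem_ball_zero_iff]; linarith [hnorm y hy]
  have hcm : ∀ θ : ℝ, circleMap z R θ ∈ closedBall z R := fun θ =>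
    circleMap_mem_closedBall z hR0.le θ
  set u : ℂ → ℝ → ℂ := fun t θ => deriv (circleMap z R) θ •
    (((circleMap z R θ - z) ^ 2)⁻¹ • b t (circleMap z R θ)) with hu
  have hcauchy : ∀ t ∈ ball (0:ℂ) 1, deriv (b t) z =
      (2 * Real.pi * I : ℂ)⁻¹ • ∫ θ in Ioc 0 (2 * Real.pi), u t θ := by
    intro t ht
    rw [← two_pi_I_inv_smul_circleIntegral_sub_sq_inv_smul_of_differentiable isOpen_ball hsub
      (hb1 t ht) (mem_ball_self hR0), circleIntegral,
      intervalIntegral.integral_of_le (by positivity)]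
  have hd : DifferentiableOn ℂ (fun t => ∫ θ in Ioc 0 (2 * Real.pi), u t θ) (ball (0:ℂ) 1) := by
    refine holo_param _ u (fun _ => R * ((R^2)⁻¹ * (M - M * Real.log R)))
      (integrableOn_const measure_Ioc_lt_top.ne) ?_ (Eventually.of_forall fun θ => ⟨?_, ?_⟩)
    · intro t ht
      refine Continuous.aestronglyMeasurable ?_
      simp only [hu, deriv_circleMap]
      have h1 : Continuous (fun θ => b t (circleMap z R θ)) :=
        (hb1 t ht).continuousOn.comp_continuous (continuous_circleMap z R) fun θ => hsub (hcm θ)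
      have h2 : Continuous (fun θ => ((circleMap z R θ - z) ^ 2)⁻¹) := by
        refine Continuous.inv₀ (((continuous_circleMap z R).sub continuous_const).pow 2) fun θ => ?_
        exact pow_ne_zero _ (sub_ne_zero.2 (circleMap_ne_center hR0.ne'))
      exact ((continuous_circleMap 0 R).mul continuous_const).smul (h2.smul h1)
    · simp only [hu, smul_eq_mul]
      exact ((hb2 _ (hsub (hcm θ))).const_mul _).const_mul _
    · intro t ht
      have hg := bloch_growth M (b t) (hb1 t ht) (hbd t ht) _ (hsub (hcm θ))
      have hl : Real.log R ≤ Real.log (1 - ‖circleMap z R θ‖) :=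
        Real.log_le_log hR0 (by linarith [hnorm _ (hcm θ)])
      have hK : ‖b t (circleMap z R θ)‖ ≤ M - M * Real.log R := by nlinarith
      simp only [hu, norm_smul, deriv_circleMap, norm_mul, norm_inv, norm_pow, norm_I, mul_one,
        norm_circleMap_zero, abs_of_pos hR0]
      have : ‖circleMap z R θ - z‖ = R := by simp [circleMap, abs_of_pos hR0]
      rw [this]
      gcongr
  exact (hd.const_smul ((2 * Real.pi * I : ℂ)⁻¹)).congr hcauchy

theorem stmt14 (M : ℝ) (hM : 0 < M) (b : ℂ → ℂ → ℂ)
    (hb1 : ∀ t ∈ Metric.ball (0:ℂ) 1, DifferentiableOn ℂ (b t) (Metric.ball (0:ℂ) 1))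
    (hb2 : ∀ z ∈ Metric.ball (0:ℂ) 1,
      DifferentiableOn ℂ (fun t => b t z) (Metric.ball (0:ℂ) 1))
    (hbd : ∀ t ∈ Metric.ball (0:ℂ) 1, ∀ z ∈ Metric.ball (0:ℂ) 1,
      ‖b t 0‖ + (1 - ‖z‖^2) * ‖deriv (b t) z‖ ≤ M)
    (g : ℂ → ℂ) (hg : DifferentiableOn ℂ g (Metric.ball (0:ℂ) 1))
    (hgint : MeasureTheory.IntegrableOn g (Metric.ball (0:ℂ) 1)) :
    ∃ F : ℂ → ℂ,
      (∀ t ∈ Metric.ball (0:ℂ) 1,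
        Filter.Tendsto
          (fun r : ℝ => (1 / (Real.pi : ℂ)) *
            ∫ z in Metric.ball (0:ℂ) 1, b t z * (starRingEnd ℂ) (g ((r : ℂ) * z)))
          (𝓝[<] (1:ℝ)) (𝓝 (F t))) ∧
      DifferentiableOn ℂ F (Metric.ball (0:ℂ) 1) := by
  have hk := dslope_integrable g hg hgint
  set k : ℂ → ℂ := dslope g 0 with hkdef
  refine ⟨fun t => (1 / (Real.pi : ℂ)) * (Real.pi * b t 0 * (starRingEnd ℂ) (g 0) +
    ∫ z in ball (0:ℂ) 1, (((1 - ‖z‖^2 : ℝ) : ℂ) * deriv (b t) z) * (starRingEnd ℂ) (k z)),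
    ?_, ?_⟩
  · intro t ht
    have hlim := dilation_limit M (fun z : ℂ => ((1 - ‖z‖^2 : ℝ) : ℂ) * deriv (b t) z) k
      (weighted_cont _ (hb1 t ht)) (weighted_bound M _ (hbd t ht)) hk.1 hk.2
    refine Tendsto.const_mul _ ?_
    refine (hlim.const_add (Real.pi * b t 0 * (starRingEnd ℂ) (g 0))).congr' ?_
    filter_upwards [self_mem_nhdsWithin,
      mem_nhdsWithin_of_mem_nhds (isOpen_Ioi.mem_nhds (zero_lt_one (α := ℝ)))] with r h1 h0
    have h1 : r < 1 := h1
    have h0 : 0 < r := h0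
    set c : ℕ → ℂ := fun n => iteratedDeriv n g 0 / n.factorial with hc
    have hsum : ∀ w ∈ ball (0:ℂ) 1, HasSum (fun n => c n * w ^ n) (g w) := by
      intro w hw
      have := Complex.hasSum_taylorSeries_on_ball hg hw
      refine hasSum_congr_aux this (fun n => ?_) rfl
      simp only [hc, sub_zero, smul_eq_mul]
      ring
    have hc0 : c 0 = g 0 := by simp [hc]
    have hsumk : ∀ w ∈ ball (0:ℂ) 1, HasSum (fun n => c (n+1) * w ^ n) (k w) := by
      intro w hw
      by_cases hw0 : w = 0
      · subst hw0
        have : k 0 = c (0 + 1) * (0:ℂ) ^ 0 := by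
          simp [hkdef, hc, iteratedDeriv_one]
        rw [this]
        exact hasSum_single 0 (fun n hn => by simp [hn])
      · have h2 := (hasSum_nat_add_iff' (f := fun n => c n * w ^ n) 1).2 (hsum w hw)
        have h3 := h2.mul_left w⁻¹
        refine hasSum_congr_aux h3 (fun n => ?_) ?_
        · field_simp
          ring
        · rw [hkdef, dslope_of_ne _ hw0, slope_def_module]
          simp [hc0]
    have hrz : ∀ z ∈ ball (0:ℂ) 1, (r:ℂ) * z ∈ ball (0:ℂ) 1 := by
      intro z hz
      rw [mem_ball_zero_iff] at hz ⊢
      rw [norm_mul, Complex.norm_real, Real.norm_of_nonneg h0.le]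
      nlinarith [norm_nonneg z]
    have hsr : (r:ℂ) ∈ ball (0:ℂ) 1 := by
      rw [mem_ball_zero_iff, Complex.norm_real, Real.norm_of_nonneg h0.le]
      exact h1
    have hid := pairing_identity M (b t) (hb1 t ht) (hbd t ht) (fun n => c n * (r:ℂ) ^ n)
      (hsum r hsr).summable.norm (fun z => g (r * z)) (fun z => r * k (r * z))
      (by
        intro z hz
        refine hasSum_congr_aux (hsum _ (hrz z hz)) (fun n => ?_) rfl
        rw [mul_pow, mul_assoc])
      (by
        intro z hz
        refine hasSum_congr_aux ((hsumk _ (hrz z hz)).mul_left (r:ℂ)) (fun n => ?_) rfl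
        rw [mul_pow, pow_succ]
        ring)
    rw [hid]
    simp only [pow_zero, mul_one, hc0]
  · refine DifferentiableOn.const_mul (DifferentiableOn.add ?_ ?_) _
    · exact ((hb2 0 (by simp)).const_mul _).mul_const _
    · refine holo_param _ (fun t z => (((1 - ‖z‖^2 : ℝ) : ℂ) * deriv (b t) z) *
        (starRingEnd ℂ) (k z)) (fun z => M * ‖k z‖) (hk.2.norm.const_mul M) ?_ ?_
      · intro t ht
        refine ContinuousOn.aestronglyMeasurable ?_ measurableSet_ball
        exact (weighted_cont _ (hb1 t ht)).mul (Complex.continuous_conj.comp_continuousOn hk.1)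
      · refine (ae_restrict_iff' measurableSet_ball).2 (Eventually.of_forall fun z hz => ⟨?_, ?_⟩)
        · exact ((deriv_holo M hM b hb1 hb2 hbd z hz).const_mul _).mul_const _
        · intro t ht
          rw [norm_mul, RCLike.norm_conj]
          exact mul_le_mul_of_nonneg_right (weighted_bound M _ (hbd t ht) z hz) (norm_nonneg _)
end
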